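/- For every universal oracle machine U, the totality probability μ(TOT(U)) is a 2-random 0'-right-c.e. real. Conversely, every 2-random 0'-right-c.e. real α ∈ (0,1) equals μ(TOT(U)) for some universal oracle machine U. -/

import Mathlib

open scoped Classical
open MeasureTheory

namespace RandProb

/-- Cantor space: the space of infinite binary sequences. -/
abbrev Cantor := ℕ → Bool

/-! ### Oracle partial recursive functions, via codes -/

/-- Codes for partial recursive functions with access to an oracle `O : ℕ → ℕ`.
These codes play the role of (oracle) Turing machines. -/
inductive CodeO : Type
  | zero : CodeO
  | succ : CodeO
  | left : CodeO
  | right : CodeO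
  | oracle : CodeO
  | pair : CodeO → CodeO → CodeO
  | comp : CodeO → CodeO → CodeO
  | prec : CodeO → CodeO → CodeO
  | rfind' : CodeO → CodeO

/-- Evaluation of an oracle code with (total) oracle `O`. -/
def CodeO.eval (O : ℕ → ℕ) : CodeO → ℕ →. ℕ
  | .zero => pure 0
  | .succ => Nat.succ
  | .left => ↑fun n : ℕ => n.unpair.1
  | .right => ↑fun n : ℕ => n.unpair.2
  | .oracle => ↑fun n : ℕ => O n
  | .pair cf cg => fun n => Nat.pair <$> cf.eval O n <*> cg.eval O n
  | .comp cf cg => fun n => cg.eval O n >>= cf.eval O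
  | .prec cf cg =>
    Nat.unpaired fun a n =>
      n.rec (cf.eval O a) fun y IH => do
        let i ← IH
        cg.eval O (Nat.pair a (Nat.pair y i))
  | .rfind' cf =>
    Nat.unpaired fun a m =>
      (Nat.rfind fun n => (fun m => m = 0) <$> cf.eval O (Nat.pair a (n + m))).map (· + m)

/-- A canonical injective numbering of oracle codes. -/
def CodeO.encode : CodeO → ℕ
  | .zero => 0
  | .succ => 1
  | .left => 2
  | .right => 3
  | .oracle => 4
  | .pair cf cg => 2 * (2 * Nat.pair cf.encode cg.encode) + 5
  | .comp cf cg => 2 * (2 * Nat.pair cf.encode cg.encode + 1) + 5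
  | .prec cf cg => 2 * (2 * Nat.pair cf.encode cg.encode) + 6
  | .rfind' cf => 2 * (2 * cf.encode + 1) + 6

/-- The Turing jump of an oracle: the halting problem relative to `O`,
as a `{0,1}`-valued function. -/
noncomputable def jump (O : ℕ → ℕ) : ℕ → ℕ := fun e =>
  if ∃ c : CodeO, c.encode = e ∧ (c.eval O e).Dom then 1 else 0

/-- `iterJump n` is `∅^(n)`, the `n`-th iterate of the halting problem (as an oracle). -/
noncomputable def iterJump : ℕ → ℕ → ℕ
  | 0 => fun _ => 0
  | n + 1 => jump (iterJump n)

/-- `S ⊆ ℕ` is computably enumerable relative to the oracle `O`. -/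
def CeIn (O : ℕ → ℕ) (S : Set ℕ) : Prop := ∃ c : CodeO, S = {m | (c.eval O m).Dom}

/-- The left Dedekind cut of `α` (as a set of codes of rationals) is c.e. in `O`. -/
def LeftCeIn (O : ℕ → ℕ) (α : ℝ) : Prop :=
  CeIn O {m | ∃ q : ℚ, Encodable.encode q = m ∧ (q : ℝ) < α}

/-- The right Dedekind cut of `α` (as a set of codes of rationals) is c.e. in `O`. -/
def RightCeIn (O : ℕ → ℕ) (α : ℝ) : Prop :=
  CeIn O {m | ∃ q : ℚ, Encodable.encode q = m ∧ α < (q : ℝ)}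

/-! ### Martin-Löf randomness for real numbers -/

/-- The `i`-th component of a Martin-Löf test coded by the set `W ⊆ ℕ`:
the union of all open rational intervals whose codes are enumerated into the
`i`-th section of `W`. -/
def testSet (W : Set ℕ) (i : ℕ) : Set ℝ :=
  {x | ∃ p q : ℚ, Nat.pair i (Encodable.encode (p, q)) ∈ W ∧ (p : ℝ) < x ∧ x < (q : ℝ)}

/-- `α` is Martin-Löf random relative to the oracle `O`. -/
def MLRandomIn (O : ℕ → ℕ) (α : ℝ) : Prop :=
  ∀ W : Set ℕ, CeIn O W →
    (∀ i, volume (testSet W i) ≤ ENNReal.ofReal ((2 : ℝ)⁻¹ ^ i)) →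
    ∃ i, α ∉ testSet W i

/-- `α` is `n`-random: Martin-Löf random relative to `∅^(n-1)`. -/
def NRandom (n : ℕ) (α : ℝ) : Prop := MLRandomIn (iterJump (n - 1)) α

/-! ### The uniform measure on Cantor space -/

/-- The binary digits of a real number (meaningful on `[0,1)`). -/
noncomputable def digits (x : ℝ) : Cantor := fun n => decide (⌊x * 2 ^ (n + 1)⌋ % 2 = 1)

/-- The uniform (Lebesgue) product measure on Cantor space, obtained as the
pushforward of Lebesgue measure on `[0,1)` under the binary-digit map. -/
noncomputable def mu : Measure Cantor :=
  Measure.map digits (volume.restrict (Set.Ico (0 : ℝ) 1))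

/-- The uniform measure of a set of elements of Cantor space, as a real number. -/
noncomputable def muR (S : Set Cantor) : ℝ := (mu S).toReal

/-! ### Strings, prefixes and cylinders -/

/-- The length-`n` initial segment of `X ∈ 2^ω`, as a finite binary string. -/
def initSeg (X : Cantor) (n : ℕ) : List Bool := (List.range n).map X

/-- `⟦S⟧`: the elements of Cantor space having a prefix in the set of strings `S`. -/
def cyl (S : Set (List Bool)) : Set Cantor := {X | ∃ n, initSeg X n ∈ S}

/-- A set of strings is prefix-free if none of its elements properly extends another. -/
def IsPrefixFree (S : Set (List Bool)) : Prop := ∀ σ ∈ S, ∀ τ ∈ S, σ <+: τ → σ = τ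

/-- A set of strings is upward closed if it is closed under taking extensions. -/
def UpClosed (S : Set (List Bool)) : Prop := ∀ σ ∈ S, ∀ τ, σ <+: τ → τ ∈ S

/-- Two strings are compatible if one is a prefix of the other. -/
def Compatible (σ τ : List Bool) : Prop := σ <+: τ ∨ τ <+: σ

/-! ### Oracle machines -/

/-- An element of Cantor space viewed as a `{0,1}`-valued oracle. -/
def oX (X : Cantor) : ℕ → ℕ := fun n => cond (X n) 1 0

/-- `evalO X c n`: the (possibly divergent) output of the oracle machine `c`
on input `n` with oracle `X`. -/
def evalO (X : Cantor) (c : CodeO) (n : ℕ) : Part ℕ := c.eval (oX X) n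

/-- The oracle obtained by writing the string `ρ` before the bits of `X`. -/
def prepend (ρ : List Bool) (X : Cantor) : Cantor := fun n =>
  if n < ρ.length then ρ.getD n false else X (n - ρ.length)

/-- `X ∈ 2^ω` extends the finite string `ρ`. -/
def Extends (X : Cantor) (ρ : List Bool) : Prop := initSeg X ρ.length = ρ

/-- `u` is a universal oracle machine: some effective, prefix-free translation
`c ↦ σ_c` satisfies `u(σ_c * X, n) ≃ c(X, n)` for all machines `c`. -/
def UniversalOM (u : CodeO) : Prop :=
  ∃ σ : CodeO → List Bool,
    (∃ f : ℕ → ℕ, Computable f ∧ ∀ c : CodeO, f c.encode = Encodable.encode (σ c)) ∧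
    IsPrefixFree (Set.range σ) ∧
    ∀ (c : CodeO) (X : Cantor) (n : ℕ), evalO (prepend (σ c) X) u n = evalO X c n

/-- `TOT(c)`: the oracles `X` such that the function `c(X)` is total. -/
def TOT (c : CodeO) : Set Cantor := {X | ∀ n, (evalO X c n).Dom}

/-- The domain of the partial function `c(X)`. -/
def domSet (c : CodeO) (X : Cantor) : Set ℕ := {n | (evalO X c n).Dom}

/-- The range of the partial function `c(X)`. -/
def ranSet (c : CodeO) (X : Cantor) : Set ℕ := {v | ∃ n, v ∈ evalO X c n}

/-- `INF(c)`: the oracles `X` such that `c(X)` has infinite domain. -/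
def INF (c : CodeO) : Set Cantor := {X | (domSet c X).Infinite}

/-- `COF(c)`: the oracles `X` such that `c(X)` has cofinite domain. -/
def COF (c : CodeO) : Set Cantor := {X | (domSet c X)ᶜ.Finite}

/-- `COM(c)`: the oracles `X` such that `c(X)` has computable domain. -/
def COM (c : CodeO) : Set Cantor := {X | ComputablePred fun n => n ∈ domSet c X}

/-- The characteristic function of a set of naturals. -/
noncomputable def chi (A : Set ℕ) : ℕ → ℕ := fun n => if n ∈ A then 1 else 0

/-- Turing reducibility between sets of naturals. -/
def TuringLEs (B A : Set ℕ) : Prop := ∃ c : CodeO, ∀ n, c.eval (chi A) n = Part.some (chi B n)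

/-- The halting problem `∅'` as a set of naturals. -/
noncomputable def HaltingSet : Set ℕ := {e | iterJump 1 e = 1}

/-- `COMPL(c)`: the oracles `X` such that the domain of `c(X)` computes the halting problem. -/
noncomputable def COMPL (c : CodeO) : Set Cantor := {X | TuringLEs HaltingSet (domSet c X)}

/-- Turing reducibility between total functions on ℕ. -/
def TuringLEf (f g : ℕ → ℕ) : Prop := ∃ c : CodeO, ∀ n, c.eval g n = Part.some (f n)

/-- A real number viewed as an oracle, via its binary expansion. -/
noncomputable def realOracle (α : ℝ) : ℕ → ℕ := oX (digits α)

/-- Two reals have Turing-incomparable degrees. -/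
noncomputable def TIncompReal (α β : ℝ) : Prop :=
  ¬ TuringLEf (realOracle α) (realOracle β) ∧ ¬ TuringLEf (realOracle β) (realOracle α)

/-! ### Arithmetical hierarchy -/

/-- Evaluation with the trivial (empty) oracle: ordinary partial recursion. -/
def eval0 (c : CodeO) : ℕ →. ℕ := c.eval fun _ => 0

/-- `SigmaNumIdx n c` is the `Σ^0_{n+1}` subset of `ℕ` with index `c`. -/
def SigmaNumIdx : ℕ → CodeO → Set ℕ
  | 0, c => {m | (eval0 c m).Dom}
  | n + 1, c => {m | ∃ k, Nat.pair m k ∉ SigmaNumIdx n c}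

/-- `S ⊆ ℕ` is `Σ^0_n` (intended for `n ≥ 1`). -/
def SigmaN (n : ℕ) (S : Set ℕ) : Prop := ∃ c : CodeO, S = SigmaNumIdx (n - 1) c

/-- The set of codes of the elements of a set of binary strings. -/
def strCodes (S : Set (List Bool)) : Set ℕ := {m | ∃ σ ∈ S, Encodable.encode σ = m}

/-- A set of binary strings is `Σ^0_n`. -/
def SigmaStr (n : ℕ) (S : Set (List Bool)) : Prop := SigmaN n (strCodes S)

/-- A set of binary strings is `Π^0_n`: its complement is `Σ^0_n`. -/
def PiStr (n : ℕ) (S : Set (List Bool)) : Prop := SigmaStr n Sᶜ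

/-- A set of binary strings is c.e. relative to the oracle `O`. -/
def CeStrIn (O : ℕ → ℕ) (S : Set (List Bool)) : Prop := CeIn O (strCodes S)

/-- `SigmaClassIdx n c m` is the `Σ^0_{n+1}` class of elements of Cantor space
with index `c` and parameter `m`. -/
def SigmaClassIdx : ℕ → CodeO → ℕ → Set Cantor
  | 0, c, m => {X | (evalO X c m).Dom}
  | n + 1, c, m => {X | ∃ k, X ∉ SigmaClassIdx n c (Nat.pair m k)}

/-! ### Monotone machines -/

/-- A monotone machine: a partial computable, monotone map on finite binary strings. -/
structure MonoMachine where
  f : List Bool →. List Bool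
  partrec : Partrec f
  mono : ∀ ⦃σ τ a b : List Bool⦄, σ <+: τ → a ∈ f σ → b ∈ f τ → a <+: b

/-- The oracles `X` such that the output of the monotone machine on `X` is infinite. -/
def MonoINF (M : MonoMachine) : Set Cantor :=
  {X | ∀ k, ∃ n a, a ∈ M.f (initSeg X n) ∧ k ≤ a.length}

/-- The `k`-th bit of the output `M(X)` of a monotone machine is `b`. -/
def MonoMachine.hasBit (M : MonoMachine) (X : Cantor) (k : ℕ) (b : Bool) : Prop :=
  ∃ n a, a ∈ M.f (initSeg X n) ∧ a[k]? = some b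

/-- `U` is a universal monotone machine. -/
def UniversalMono (U : MonoMachine) : Prop :=
  ∃ (M : ℕ → MonoMachine) (σ : ℕ → List Bool),
    Partrec₂ (fun (e : ℕ) (τ : List Bool) => (M e).f τ) ∧
    (∀ V : MonoMachine, ∃ e, (M e).f = V.f) ∧
    Computable σ ∧ IsPrefixFree (Set.range σ) ∧
    ∀ e τ, U.f (σ e ++ τ) = (M e).f τ

/-! ### Infinitary self-delimiting machines -/

/-- Chaitin's infinitary self-delimiting machines: `f σ n` is the `n`-th approximation
of the output on program `σ` (`none` meaning divergence); the convergence relation is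
decidable, approximations are monotone, and machines are self-delimiting. -/
structure InfMachine where
  f : List Bool → ℕ → Option (List Bool)
  computable : Computable₂ f
  mono : ∀ σ m n a, n < m → f σ m = some a → ∃ b, f σ n = some b ∧ b <+: a
  sd : ∀ σ τ n a, f σ n = some a → f (σ ++ τ) n = some a

/-- `M^∞(σ)↓`: all approximations converge. -/
def InfMachine.domInf (M : InfMachine) (σ : List Bool) : Prop := ∀ n, M.f σ n ≠ none

/-- The domain of `M^∞`. -/
def InfMachine.DOM (M : InfMachine) : Set (List Bool) := {σ | M.domInf σ}

/-- The output `M^∞(σ)` is infinite (a stream). -/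
def InfMachine.outInf (M : InfMachine) (σ : List Bool) : Prop :=
  ∀ k, ∃ n a, M.f σ n = some a ∧ k ≤ a.length

/-- `FIN(M^∞)`: programs in the domain with finite output. -/
def InfMachine.FIN (M : InfMachine) : Set (List Bool) := {σ | M.domInf σ ∧ ¬ M.outInf σ}

/-- `INF(M^∞)`: programs in the domain with infinite output. -/
def InfMachine.INF (M : InfMachine) : Set (List Bool) := {σ | M.domInf σ ∧ M.outInf σ}

/-- The `k`-th bit of the output `M^∞(σ)` is `b`. -/
def InfMachine.hasBit (M : InfMachine) (σ : List Bool) (k : ℕ) (b : Bool) : Prop :=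
  ∃ n a, M.f σ n = some a ∧ a[k]? = some b

/-- The domain of the prefix-free machine `M^*`: minimal strings in the domain of `M^∞`. -/
def InfMachine.DOMstar (M : InfMachine) : Set (List Bool) :=
  {σ | M.domInf σ ∧ ∀ τ, τ <+: σ → τ ≠ σ → ¬ M.domInf τ}

/-- Programs whose output is a stream with a tail of 1s. -/
def InfMachine.COFout (M : InfMachine) : Set (List Bool) :=
  {σ | M.domInf σ ∧ M.outInf σ ∧ ∃ t, ∀ k, t ≤ k → M.hasBit σ k true}

/-- `A^∞(σ) ≃ B^∞(τ)`: both converge or both diverge, with equal outputs. -/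
def InfAgree (A : InfMachine) (σ : List Bool) (B : InfMachine) (τ : List Bool) : Prop :=
  (A.domInf σ ↔ B.domInf τ) ∧ (A.domInf σ → ∀ k b, (A.hasBit σ k b ↔ B.hasBit τ k b))

/-- `U` is a universal infinitary self-delimiting machine. -/
def UniversalInf (U : InfMachine) : Prop :=
  ∃ (M : ℕ → InfMachine) (σ : ℕ → List Bool),
    Computable (fun p : ℕ × List Bool × ℕ => (M p.1).f p.2.1 p.2.2) ∧
    (∀ V : InfMachine, ∃ e, ∀ τ, InfAgree (M e) τ V τ) ∧
    Computable σ ∧ IsPrefixFree (Set.range σ) ∧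
    ∀ e τ, InfAgree U (σ e ++ τ) (M e) τ

end RandProb

/-!
Totality is a `Π₂` property of the oracle, and the measures of `Π₂` classes are limits of
decreasing sequences computable in `∅'`; conversely every `∅'`-right-c.e. number in `[0, 1]` is the
measure of a `Π₂` class, uniformly, and every `Π₂` class is `TOT` of some machine.

*The totality probability is 2-random.* Let `W` be a Martin-Löf test relative to `∅'`. Suppose that
a machine `M` knows the prefix `ρ` at which `U` runs it. Write `μ(TOT(U)) = 2^(-ℓ) β + γ` with
`ℓ = |ρ|`, where `β = μ(TOT(M))` is up to `M` and the amount `γ` comes from outside the cone of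
`ρ`. Starting from `β = 1`, `M` lowers `β` just enough to leave an interval of the `ℓ`-th level of
`W` whenever `2^(-ℓ) β + γ` appears to be in it. Since `γ` is approximated from above, no point of
the level is jumped over twice, so `2^(-ℓ) β` decreases by at most the measure `2^(-ℓ)` of the
level, which `β` can afford. The recursion theorem would tell `M` its prefix. It is avoided by
letting `M` read a guess `m` of the code of its prefix from a block `1^m 0` at the front of its
input and play, on the rest of the input, against the cone that this guess determines: one of the
guesses is right.

*Every 2-random `∅'`-right-c.e. number is a totality probability.* Given `α`, let `D` be a universal
machine and `β = μ(TOT(D))`. By the Kučera–Slaman argument, `α - 2^(-n) β` is `∅'`-right-c.e. for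
some `n`: if an attempt at approximating it from above fails, the approximation of `α` never makes
up for the drops in that of `β`, and `α` is caught in a set of measure proportional to `2^(-n)`. Now
run `D` on the cone of `0^n` and be total outside that cone exactly on the binary digits of the
numbers in `[2^(-n), γ]`, where `γ = α - 2^(-n) β + 2^(-n)`. Since this machine simulates `D`, it is
universal.
-/

namespace RandProb

-- Unfolding `Computable f` to a statement about a partial function would confuse `fun_prop`.
attribute [local irreducible] Computable

section Computable

attribute [fun_prop] Computable
attribute [fun_prop] Computable.id Computable.const Computable.comp

variable {α β γ : Type*} [Primcodable α] [Primcodable β] [Primcodable γ]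

@[fun_prop] theorem computable_fst {f : α → β × γ} (hf : Computable f) :
    Computable fun x => (f x).1 := Computable.fst.comp hf

@[fun_prop] theorem computable_snd {f : α → β × γ} (hf : Computable f) :
    Computable fun x => (f x).2 := Computable.snd.comp hf

@[fun_prop] theorem computable_mk {f : α → β} {g : α → γ} (hf : Computable f)
    (hg : Computable g) : Computable fun x => (f x, g x) := hf.pair hg

@[fun_prop] theorem computable_nat_add {f g : α → ℕ} (hf : Computable f) (hg : Computable g) :
    Computable fun x => f x + g x := Primrec.nat_add.to_comp.comp hf hg

@[fun_prop] theorem computable_nat_mul {f g : α → ℕ} (hf : Computable f) (hg : Computable g) :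
    Computable fun x => f x * g x := Primrec.nat_mul.to_comp.comp hf hg

@[fun_prop] theorem computable_nat_sub {f g : α → ℕ} (hf : Computable f) (hg : Computable g) :
    Computable fun x => f x - g x := Primrec.nat_sub.to_comp.comp hf hg

@[fun_prop] theorem computable_nat_div {f g : α → ℕ} (hf : Computable f) (hg : Computable g) :
    Computable fun x => f x / g x := Primrec.nat_div.to_comp.comp hf hg

@[fun_prop] theorem computable_nat_mod {f g : α → ℕ} (hf : Computable f) (hg : Computable g) :
    Computable fun x => f x % g x := Primrec.nat_mod.to_comp.comp hf hg

@[fun_prop] theorem computable_nat_pair {f g : α → ℕ} (hf : Computable f) (hg : Computable g) :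
    Computable fun x => Nat.pair (f x) (g x) := Primrec₂.natPair.to_comp.comp hf hg

@[fun_prop] theorem computable_nat_unpair {f : α → ℕ} (hf : Computable f) :
    Computable fun x => Nat.unpair (f x) := Computable.unpair.comp hf

@[fun_prop] theorem computable_encode {f : α → β} (hf : Computable f) :
    Computable fun x => Encodable.encode (f x) := Computable.encode.comp hf

@[fun_prop] theorem computable_decode {f : α → ℕ} (hf : Computable f) :
    Computable fun x => (Encodable.decode (f x) : Option β) := Computable.decode.comp hf

@[fun_prop] theorem computable_cond {c : α → Bool} {f g : α → β} (hc : Computable c)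
    (hf : Computable f) (hg : Computable g) : Computable fun x => bif c x then f x else g x :=
  Computable.cond hc hf hg

@[fun_prop] theorem computable_nat_rec {n : α → ℕ} {f : α → β} {g : α → ℕ → β → β}
    (hn : Computable n) (hf : Computable f)
    (hg : Computable fun p : α × ℕ × β => g p.1 p.2.1 p.2.2) :
    Computable fun x => Nat.rec (motive := fun _ => β) (f x) (g x) (n x) :=
  Computable.nat_rec (h := fun a p => g a p.1 p.2) hn hf hg

@[fun_prop] theorem computable_some {f : α → β} (hf : Computable f) :
    Computable fun x => some (f x) := Computable.option_some.comp hf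

@[fun_prop] theorem computable_option_getD {f : α → Option β} {g : α → β} (hf : Computable f)
    (hg : Computable g) : Computable fun x => (f x).getD (g x) := Computable.option_getD hf hg

@[fun_prop] theorem computable_option_isSome {f : α → Option β} (hf : Computable f) :
    Computable fun x => (f x).isSome := Primrec.option_isSome.to_comp.comp hf

@[fun_prop] theorem computable_option_bind {f : α → Option β} {g : α → β → Option γ}
    (hf : Computable f) (hg : Computable fun p : α × β => g p.1 p.2) :
    Computable fun x => (f x).bind (g x) := Computable.option_bind hf hg

@[fun_prop] theorem computable_option_map {f : α → Option β} {g : α → β → γ}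
    (hf : Computable f) (hg : Computable fun p : α × β => g p.1 p.2) :
    Computable fun x => (f x).map (g x) := Computable.option_map hf hg

@[fun_prop] theorem computable_option_elim {f : α → Option β} {g : α → γ} {h : α → β → γ}
    (hf : Computable f) (hg : Computable g) (hh : Computable fun p : α × β => h p.1 p.2) :
    Computable fun x => (f x).elim (g x) (h x) :=
  (Computable.option_casesOn hf hg hh).of_eq fun x => by cases f x <;> rfl

@[fun_prop] theorem computable_and {f g : α → Bool} (hf : Computable f) (hg : Computable g) :
    Computable fun x => f x && g x := Primrec.and.to_comp.comp hf hg

@[fun_prop] theorem computable_or {f g : α → Bool} (hf : Computable f) (hg : Computable g) :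
    Computable fun x => f x || g x := Primrec.or.to_comp.comp hf hg

@[fun_prop] theorem computable_not {f : α → Bool} (hf : Computable f) :
    Computable fun x => !(f x) := Primrec.not.to_comp.comp hf

@[fun_prop] theorem computable_decide_nat_le {f g : α → ℕ} (hf : Computable f)
    (hg : Computable g) : Computable fun x => decide (f x ≤ g x) :=
  Primrec.nat_le.decide.to_comp.comp hf hg

@[fun_prop] theorem computable_decide_nat_lt {f g : α → ℕ} (hf : Computable f)
    (hg : Computable g) : Computable fun x => decide (f x < g x) :=
  Primrec.nat_lt.decide.to_comp.comp hf hg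

@[fun_prop] theorem computable_decide_eq [DecidableEq β] {f g : α → β} (hf : Computable f)
    (hg : Computable g) : Computable fun x => decide (f x = g x) :=
  Primrec.eq.decide.to_comp.comp hf hg

@[fun_prop] theorem computable_list_length {f : α → List β} (hf : Computable f) :
    Computable fun x => (f x).length := Computable.list_length.comp hf

@[fun_prop] theorem computable_list_append {f g : α → List β} (hf : Computable f)
    (hg : Computable g) : Computable fun x => f x ++ g x := Computable.list_append.comp hf hg

@[fun_prop] theorem computable_list_cons {f : α → β} {g : α → List β} (hf : Computable f)
    (hg : Computable g) : Computable fun x => f x :: g x := Computable.list_cons.comp hf hg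

@[fun_prop] theorem computable_list_take {n : α → ℕ} {f : α → List β} (hn : Computable n)
    (hf : Computable f) : Computable fun x => (f x).take (n x) :=
  Primrec.list_take.to_comp.comp hn hf

@[fun_prop] theorem computable_list_drop {n : α → ℕ} {f : α → List β} (hn : Computable n)
    (hf : Computable f) : Computable fun x => (f x).drop (n x) :=
  Primrec.list_drop.to_comp.comp hn hf

@[fun_prop] theorem computable_list_getElem? {n : α → ℕ} {f : α → List β} (hn : Computable n)
    (hf : Computable f) : Computable fun x => (f x)[n x]? := Computable.list_getElem?.comp hf hn

@[fun_prop] theorem computable_nat_pow {f g : α → ℕ} (hf : Computable f) (hg : Computable g) :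
    Computable fun x => f x ^ g x := by
  have : Computable fun x => Nat.rec (motive := fun _ => ℕ) 1 (fun _ r => r * f x) (g x) := by
    fun_prop
  refine this.of_eq fun x => ?_
  induction g x with
  | zero => rfl
  | succ n ih => rw [pow_succ, ← ih]

@[fun_prop] theorem computable_list_replicate {n : α → ℕ} {f : α → β} (hn : Computable n)
    (hf : Computable f) : Computable fun x => List.replicate (n x) (f x) := by
  have : Computable fun x =>
      Nat.rec (motive := fun _ => List β) [] (fun _ r => f x :: r) (n x) := by
    fun_prop
  refine this.of_eq fun x => ?_
  induction n x with
  | zero => rfl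
  | succ n ih => rw [List.replicate_succ, ← ih]

@[fun_prop] theorem computable_map_range {n : α → ℕ} {p : α → ℕ → β} (hn : Computable n)
    (hp : Computable fun x : α × ℕ => p x.1 x.2) :
    Computable fun x => (List.range (n x)).map (p x) := by
  have : Computable fun x =>
      Nat.rec (motive := fun _ => List β) [] (fun k r => r ++ [p x k]) (n x) := by
    fun_prop
  refine this.of_eq fun x => ?_
  induction n x with
  | zero => rfl
  | succ n ih => rw [List.range_succ, List.map_append, ← ih]; rfl

@[fun_prop] theorem computable_any_range {n : α → ℕ} {p : α → ℕ → Bool} (hn : Computable n)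
    (hp : Computable fun x : α × ℕ => p x.1 x.2) :
    Computable fun x => (List.range (n x)).any (p x) := by
  have : Computable fun x =>
      Nat.rec (motive := fun _ => Bool) false (fun k r => r || p x k) (n x) := by
    fun_prop
  refine this.of_eq fun x => ?_
  induction n x with
  | zero => rfl
  | succ n ih => simp only [List.range_succ, List.any_append, List.any_cons, List.any_nil,
      Bool.or_false, ← ih]

@[fun_prop] theorem computable_all_range {n : α → ℕ} {p : α → ℕ → Bool} (hn : Computable n)
    (hp : Computable fun x : α × ℕ => p x.1 x.2) :
    Computable fun x => (List.range (n x)).all (p x) := by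
  have : Computable fun x => !(List.range (n x)).any fun k => !p x k := by fun_prop
  exact this.of_eq fun x => by simp [List.all_eq_not_any_not]

@[fun_prop] theorem computable_countP_range {n : α → ℕ} {p : α → ℕ → Bool} (hn : Computable n)
    (hp : Computable fun x : α × ℕ => p x.1 x.2) :
    Computable fun x => (List.range (n x)).countP (p x) := by
  have : Computable fun x => Nat.rec (motive := fun _ => ℕ) 0
      (fun k r => bif p x k then r + 1 else r) (n x) := by
    fun_prop
  refine this.of_eq fun x => ?_
  induction n x with
  | zero => rfl
  | succ n ih =>
    rw [List.range_succ, List.countP_append, List.countP_singleton, ← ih]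
    cases hpn : p x n <;> simp [hpn]

theorem computable_of_graph [DecidableEq β] {f : α → β}
    (h : Computable fun p : α × β => decide (f p.1 = p.2)) : Computable f := by
  obtain ⟨d, hd, hdf⟩ : ∃ d : α → β → Bool, (Computable fun p : α × β => d p.1 p.2) ∧
      ∀ x b, d x b = true ↔ f x = b := ⟨fun x b => decide (f x = b), h, by simp⟩
  let search (x : α) (n : ℕ) : Option β :=
    (Encodable.decode n : Option β).bind fun b => bif d x b then some b else none
  have search_eq {x n b} (hb : b ∈ search x n) : f x = b := by
    obtain ⟨b', -, hb'⟩ := Option.bind_eq_some_iff.1 hb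
    cases hd' : d x b' <;> simp only [hd', cond_true, cond_false, Option.some.injEq,
      reduceCtorEq] at hb'
    exact hb' ▸ (hdf x b').1 hd'
  have hsearch : Computable₂ search := by unfold Computable₂; fun_prop
  refine (Partrec.rfindOpt hsearch).of_eq_tot fun x => ?_
  have hdom : (Nat.rfindOpt (search x)).Dom :=
    Nat.rfindOpt_dom.2 ⟨Encodable.encode (f x), f x, by simp [search, (hdf x (f x)).2 rfl]⟩
  obtain ⟨b, hb⟩ := Part.dom_iff_mem.1 hdom
  obtain ⟨n, hn⟩ := Nat.rfindOpt_spec hb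
  rwa [search_eq hn]

end Computable

section Rational

theorem encode_int_natCast (n : ℕ) : Encodable.encode (n : ℤ) = 2 * n := rfl

theorem encode_int_negSucc (n : ℕ) : Encodable.encode (Int.negSucc n) = 2 * n + 1 := rfl

theorem int_natAbs_eq_encode (z : ℤ) : z.natAbs = (Encodable.encode z + 1) / 2 := by
  rcases z with n | n
  · rw [Int.ofNat_eq_natCast, encode_int_natCast, Int.natAbs_natCast]; omega
  · rw [encode_int_negSucc, Int.natAbs_negSucc]; omega

theorem int_toNat_eq_encode (z : ℤ) : z.toNat =
    bif decide (Encodable.encode z % 2 = 0) then Encodable.encode z / 2 else 0 := by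
  rcases z with n | n
  · simp [encode_int_natCast]
  · simp [encode_int_negSucc, Nat.add_mod]

theorem int_neg_toNat_eq_encode (z : ℤ) : (-z).toNat =
    bif decide (Encodable.encode z % 2 = 0) then 0 else Encodable.encode z / 2 + 1 := by
  rcases z with n | n
  · simp [encode_int_natCast]
  · rw [encode_int_negSucc, Int.neg_negSucc, Int.toNat_natCast, Bool.cond_decide,
      if_neg (by omega)]
    omega

theorem encode_rat (q : ℚ) : Encodable.encode q = Nat.pair (Encodable.encode q.num) q.den := rfl

/-- The natural numbers that encode a rational number in Mathlib's numbering of `ℚ`: pairs of the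
code of an integer and a positive denominator in lowest terms. -/
def IsRatCode (n : ℕ) : Prop :=
  0 < n.unpair.2 ∧ ((n.unpair.1 + 1) / 2).Coprime n.unpair.2

theorem isRatCode_encode (q : ℚ) : IsRatCode (Encodable.encode q) := by
  rw [encode_rat, IsRatCode, Nat.unpair_pair, ← int_natAbs_eq_encode]
  exact ⟨q.den_pos, q.reduced⟩

theorem IsRatCode.exists_encode_eq {n : ℕ} (h : IsRatCode n) : ∃ q : ℚ, Encodable.encode q = n := by
  let z := Denumerable.ofNat ℤ n.unpair.1
  have hz : Encodable.encode z = n.unpair.1 := Denumerable.encode_ofNat _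
  refine ⟨⟨z, n.unpair.2, h.1.ne', ?_⟩, ?_⟩
  · rw [int_natAbs_eq_encode, hz]; exact h.2
  · exact (encode_rat _).trans ((congrArg (Nat.pair · _) hz).trans (Nat.pair_unpair n))

theorem encode_eq_of_decode_rat {n : ℕ} {q : ℚ} (h : Encodable.decode n = some q) :
    Encodable.encode q = n := by
  rw [show (Encodable.decode n : Option ℚ) = _ from Encodable.decode_ofEquiv _ n,
    Option.map_eq_some_iff] at h
  obtain ⟨⟨z, ⟨d, hd0, hzd⟩⟩, ha, hq⟩ := h
  have hnum : q.num = z := by rw [← hq]; rfl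
  have hden : q.den = d := by rw [← hq]; rfl
  rw [encode_rat, hnum, hden]
  rw [Encodable.decode_sigma_val, Denumerable.decode_eq_ofNat, Option.bind_some,
    Option.map_eq_some_iff] at ha
  obtain ⟨d', hd, heq⟩ := ha
  obtain ⟨rfl, heq⟩ := Sigma.mk.inj heq
  obtain rfl := eq_of_heq heq
  replace hd : Encodable.decodeSubtype n.unpair.2 = some _ := hd
  simp only [Encodable.decodeSubtype, Encodable.decode_nat, Option.bind_some] at hd
  split_ifs at hd
  have hd' : n.unpair.2 = d := congrArg Subtype.val (Option.some.inj hd)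
  rw [← hd', Denumerable.encode_ofNat, Nat.pair_unpair]

theorem encode_decode_rat (n : ℕ) :
    Encodable.encode (Encodable.decode n : Option ℚ) = if IsRatCode n then n + 1 else 0 := by
  split_ifs with h
  · obtain ⟨q, rfl⟩ := h.exists_encode_eq
    rw [Encodable.encodek]; rfl
  · cases hq : (Encodable.decode n : Option ℚ) with
    | none => rfl
    | some q => exact absurd (encode_eq_of_decode_rat hq ▸ isRatCode_encode q) h

theorem coprime_iff_forall_lt {a b : ℕ} (hb : 0 < b) :
    a.Coprime b ↔ ∀ x < b + 1, x = 1 ∨ ¬ (a % x = 0 ∧ b % x = 0) := by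
  refine ⟨fun h x _ => or_iff_not_imp_left.2 fun hx ⟨ha, hb⟩ => hx ?_, fun h => ?_⟩
  · exact Nat.eq_one_of_dvd_coprimes h (Nat.dvd_of_mod_eq_zero ha) (Nat.dvd_of_mod_eq_zero hb)
  · exact (h (a.gcd b) (Nat.lt_succ_of_le (Nat.gcd_le_right _ hb))).resolve_right fun hn =>
      hn ⟨Nat.mod_eq_zero_of_dvd (a.gcd_dvd_left b), Nat.mod_eq_zero_of_dvd (a.gcd_dvd_right b)⟩

theorem primrecPred_isRatCode : PrimrecPred IsRatCode := by
  have hR : PrimrecRel fun x n : ℕ =>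
      x = 1 ∨ ¬ ((n.unpair.1 + 1) / 2 % x = 0 ∧ n.unpair.2 % x = 0) := by
    have hn : Primrec fun p : ℕ × ℕ => p.2.unpair := Primrec.unpair.comp Primrec.snd
    have hdvd {f : ℕ × ℕ → ℕ} (hf : Primrec f) : PrimrecPred fun p => f p % p.1 = 0 :=
      Primrec.eq.comp (Primrec.nat_mod.comp hf Primrec.fst) (Primrec.const 0)
    exact (Primrec.eq.comp Primrec.fst (Primrec.const 1)).or <| .not <|
      (hdvd (Primrec.nat_div.comp (Primrec.succ.comp (Primrec.fst.comp hn)) (Primrec.const 2))).and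
        (hdvd (Primrec.snd.comp hn))
  have hden : Primrec fun n : ℕ => n.unpair.2 := Primrec.snd.comp Primrec.unpair
  exact ((Primrec.nat_lt.comp (Primrec.const 0) hden).and
    (hR.forall_lt.comp (Primrec.succ.comp hden) Primrec.id)).of_eq fun n =>
      and_congr_right fun h => (coprime_iff_forall_lt h).symm

instance primcodableRat : Primcodable ℚ where
  toEncodable := Rat.instEncodable
  prim := (Primrec.nat_iff.1 (Primrec.ite primrecPred_isRatCode Primrec.succ
    (Primrec.const 0))).of_eq fun n => (encode_decode_rat n).symm

variable {α : Type*} [Primcodable α]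

@[fun_prop] theorem computable_rat_num_toNat {f : α → ℚ} (hf : Computable f) :
    Computable fun x => (f x).num.toNat := by
  have : Computable fun x => bif decide ((Encodable.encode (f x)).unpair.1 % 2 = 0) then
    (Encodable.encode (f x)).unpair.1 / 2 else 0 := by fun_prop
  exact this.of_eq fun x => by rw [int_toNat_eq_encode, encode_rat, Nat.unpair_pair]

@[fun_prop] theorem computable_rat_neg_num_toNat {f : α → ℚ} (hf : Computable f) :
    Computable fun x => (-(f x).num).toNat := by
  have : Computable fun x => bif decide ((Encodable.encode (f x)).unpair.1 % 2 = 0) then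
    0 else (Encodable.encode (f x)).unpair.1 / 2 + 1 := by fun_prop
  exact this.of_eq fun x => by rw [int_neg_toNat_eq_encode, encode_rat, Nat.unpair_pair]

@[fun_prop] theorem computable_rat_den {f : α → ℚ} (hf : Computable f) :
    Computable fun x => (f x).den := by
  have : Computable fun x => (Encodable.encode (f x)).unpair.2 := by fun_prop
  exact this.of_eq fun x => by rw [encode_rat, Nat.unpair_pair]

theorem rat_eq_toNat_sub_div (q : ℚ) :
    q = ((q.num.toNat : ℚ) - (-q.num).toNat) / q.den := by
  have h : (q.num : ℚ) = ((q.num.toNat - (-q.num).toNat : ℤ) : ℚ) := by congr 1; omega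
  rw [← Int.cast_natCast, ← Int.cast_natCast (-q.num).toNat, ← Int.cast_sub, ← h, Rat.num_div_den]

theorem computable_nat_sub_div {a b d : α → ℕ} (ha : Computable a) (hb : Computable b)
    (hd : Computable d) (hpos : ∀ x, 0 < d x) :
    Computable fun x => ((a x : ℚ) - b x) / d x := by
  refine computable_of_graph (f := fun x => ((a x : ℚ) - b x) / d x) ?_
  have : Computable fun p : α × ℚ => decide (a p.1 * p.2.den + (-p.2.num).toNat * d p.1
      = b p.1 * p.2.den + p.2.num.toNat * d p.1) := by fun_prop
  refine this.of_eq fun ⟨x, q⟩ => decide_eq_decide.2 ?_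
  have hd' : (d x : ℚ) ≠ 0 := Nat.cast_ne_zero.2 (hpos x).ne'
  have hq : (q.den : ℚ) ≠ 0 := Nat.cast_ne_zero.2 q.den_pos.ne'
  conv_rhs => rw [rat_eq_toNat_sub_div q, div_eq_div_iff hd' hq]
  rw [← Nat.cast_inj (R := ℚ)]
  push_cast
  constructor <;> intro h <;> linarith

@[fun_prop] theorem computable_rat_natCast {f : α → ℕ} (hf : Computable f) :
    Computable fun x => (f x : ℚ) :=
  (computable_nat_sub_div hf (Computable.const 0) (Computable.const 1) fun _ => one_pos).of_eq
    fun x => by simp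

@[fun_prop] theorem computable_rat_add {f g : α → ℚ} (hf : Computable f) (hg : Computable g) :
    Computable fun x => f x + g x := by
  refine (computable_nat_sub_div
    (a := fun x => (f x).num.toNat * (g x).den + (g x).num.toNat * (f x).den)
    (b := fun x => (-(f x).num).toNat * (g x).den + (-(g x).num).toNat * (f x).den)
    (d := fun x => (f x).den * (g x).den) (by fun_prop) (by fun_prop) (by fun_prop)
    fun x => mul_pos (f x).den_pos (g x).den_pos).of_eq fun x => ?_
  have hf' : ((f x).den : ℚ) ≠ 0 := Nat.cast_ne_zero.2 (f x).den_pos.ne'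
  have hg' : ((g x).den : ℚ) ≠ 0 := Nat.cast_ne_zero.2 (g x).den_pos.ne'
  rw [eq_comm]
  nth_rewrite 1 [rat_eq_toNat_sub_div (f x), rat_eq_toNat_sub_div (g x)]
  push_cast
  field_simp
  ring

@[fun_prop] theorem computable_rat_mul {f g : α → ℚ} (hf : Computable f) (hg : Computable g) :
    Computable fun x => f x * g x := by
  refine (computable_nat_sub_div
    (a := fun x => (f x).num.toNat * (g x).num.toNat + (-(f x).num).toNat * (-(g x).num).toNat)
    (b := fun x => (f x).num.toNat * (-(g x).num).toNat + (-(f x).num).toNat * (g x).num.toNat)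
    (d := fun x => (f x).den * (g x).den) (by fun_prop) (by fun_prop) (by fun_prop)
    fun x => mul_pos (f x).den_pos (g x).den_pos).of_eq fun x => ?_
  rw [eq_comm]
  nth_rewrite 1 [rat_eq_toNat_sub_div (f x), rat_eq_toNat_sub_div (g x)]
  rw [div_mul_div_comm]
  push_cast
  ring

@[fun_prop] theorem computable_rat_sub {f g : α → ℚ} (hf : Computable f) (hg : Computable g) :
    Computable fun x => f x - g x := by
  have : Computable fun x => f x + (-1) * g x := by fun_prop
  exact this.of_eq fun x => by ring

@[fun_prop] theorem computable_rat_pow {f : α → ℚ} {g : α → ℕ} (hf : Computable f)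
    (hg : Computable g) : Computable fun x => f x ^ g x := by
  have : Computable fun x => Nat.rec (motive := fun _ => ℚ) 1 (fun _ r => r * f x) (g x) := by
    fun_prop
  refine this.of_eq fun x => ?_
  induction g x with
  | zero => simp
  | succ n ih => rw [pow_succ, ← ih]

@[fun_prop] theorem computable_decide_rat_le {f g : α → ℚ} (hf : Computable f)
    (hg : Computable g) : Computable fun x => decide (f x ≤ g x) := by
  have : Computable fun x => decide ((f x - g x).num.toNat ≤ 0) := by fun_prop
  exact this.of_eq fun x => decide_eq_decide.2 <| by
    rw [Nat.le_zero, Int.toNat_eq_zero, Rat.num_nonpos, sub_nonpos]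

@[fun_prop] theorem computable_decide_rat_lt {f g : α → ℚ} (hf : Computable f)
    (hg : Computable g) : Computable fun x => decide (f x < g x) := by
  have : Computable fun x => !(decide (g x ≤ f x)) := by fun_prop
  exact this.of_eq fun x => by simp [← not_le]

@[fun_prop] theorem computable_rat_min {f g : α → ℚ} (hf : Computable f) (hg : Computable g) :
    Computable fun x => min (f x) (g x) := by
  have : Computable fun x => bif decide (f x ≤ g x) then f x else g x := by fun_prop
  exact this.of_eq fun x => by rw [Bool.cond_decide, min_def]

/-- The rational number with code `n`, and `0` if `n` is not such a code. -/
def decodeRat (n : ℕ) : ℚ := (Encodable.decode n : Option ℚ).getD 0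

theorem decodeRat_encode (q : ℚ) : decodeRat (Encodable.encode q) = q := by simp [decodeRat]

@[fun_prop] theorem computable_decodeRat {f : α → ℕ} (hf : Computable f) :
    Computable fun x => decodeRat (f x) := by
  unfold decodeRat; fun_prop

end Rational

section UsePrinciple

open Filter

/-- Evaluation of an oracle code with a partial oracle. A query outside the domain of the oracle
makes the computation diverge, so that evaluation with a finite oracle records the use of a
computation. -/
def evalP (O : ℕ →. ℕ) : CodeO → ℕ →. ℕ
  | .zero => pure 0
  | .succ => Nat.succ
  | .left => ↑fun n : ℕ => n.unpair.1
  | .right => ↑fun n : ℕ => n.unpair.2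
  | .oracle => O
  | .pair cf cg => fun n => Nat.pair <$> evalP O cf n <*> evalP O cg n
  | .comp cf cg => fun n => evalP O cg n >>= evalP O cf
  | .prec cf cg =>
    Nat.unpaired fun a n =>
      n.rec (evalP O cf a) fun y IH => do
        let i ← IH
        evalP O cg (Nat.pair a (Nat.pair y i))
  | .rfind' cf =>
    Nat.unpaired fun a m =>
      (Nat.rfind fun n => (fun m => m = 0) <$> evalP O cf (Nat.pair a (n + m))).map (· + m)

theorem evalP_coe (O : ℕ → ℕ) (c : CodeO) : evalP (↑O) c = c.eval O := by
  induction c with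
  | zero | succ | left | right | oracle => rfl
  | pair _ _ hf hg | comp _ _ hf hg | prec _ _ hf hg =>
    simp only [evalP, CodeO.eval, hf, hg]; rfl
  | rfind' _ hf => simp only [evalP, CodeO.eval, hf]; rfl

theorem mem_evalP_pair {O : ℕ →. ℕ} {cf cg : CodeO} {n v : ℕ} :
    v ∈ evalP O (.pair cf cg) n ↔ ∃ a ∈ evalP O cf n, ∃ b ∈ evalP O cg n, Nat.pair a b = v := by
  simp [evalP, Seq.seq]

theorem mem_evalP_comp {O : ℕ →. ℕ} {cf cg : CodeO} {n v : ℕ} :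
    v ∈ evalP O (.comp cf cg) n ↔ ∃ a ∈ evalP O cg n, v ∈ evalP O cf a :=
  Part.mem_bind_iff

theorem evalP_prec_zero {O : ℕ →. ℕ} {cf cg : CodeO} {a : ℕ} :
    evalP O (.prec cf cg) (Nat.pair a 0) = evalP O cf a := by
  simp [evalP]

theorem mem_evalP_prec_succ {O : ℕ →. ℕ} {cf cg : CodeO} {a n v : ℕ} :
    v ∈ evalP O (.prec cf cg) (Nat.pair a (n + 1)) ↔
      ∃ i ∈ evalP O (.prec cf cg) (Nat.pair a n),
        v ∈ evalP O cg (Nat.pair a (Nat.pair n i)) := by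
  simp [evalP]

theorem mem_evalP_rfind {O : ℕ →. ℕ} {cf : CodeO} {a m v : ℕ} :
    v ∈ evalP O (.rfind' cf) (Nat.pair a m) ↔
      ∃ n, n + m = v ∧ 0 ∈ evalP O cf (Nat.pair a (n + m)) ∧
        ∀ j < n, ∃ w ∈ evalP O cf (Nat.pair a (j + m)), w ≠ 0 := by
  simp only [evalP, Nat.unpaired, Nat.unpair_pair, Part.mem_map_iff]
  refine exists_congr fun n => ?_
  rw [and_comm]
  refine and_congr_right fun _ => Nat.mem_rfind.trans (and_congr (by simp) ?_)
  exact forall_congr' fun j => forall_congr' fun _ => by simp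

theorem eventually_mem_evalP {ι : Type*} {l : Filter ι} {O : ι → ℕ →. ℕ} {O' : ℕ →. ℕ}
    (hO : ∀ n v, v ∈ O' n → ∀ᶠ i in l, v ∈ O i n) {c : CodeO} {n v : ℕ}
    (hv : v ∈ evalP O' c n) : ∀ᶠ i in l, v ∈ evalP (O i) c n := by
  induction c generalizing n v with
  | zero | succ | left | right => exact .of_forall fun _ => hv
  | oracle => exact hO n v hv
  | pair cf cg hf hg =>
    obtain ⟨a, ha, b, hb, hab⟩ := mem_evalP_pair.1 hv
    filter_upwards [hf ha, hg hb] with i ha hb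
    exact mem_evalP_pair.2 ⟨a, ha, b, hb, hab⟩
  | comp cf cg hf hg =>
    obtain ⟨a, ha, hav⟩ := mem_evalP_comp.1 hv
    filter_upwards [hg ha, hf hav] with i ha hav
    exact mem_evalP_comp.2 ⟨a, ha, hav⟩
  | prec cf cg hf hg =>
    rw [← Nat.pair_unpair n] at hv ⊢
    generalize n.unpair.2 = k at hv ⊢
    induction k generalizing v with
    | zero => simp only [evalP_prec_zero] at hv ⊢; exact hf hv
    | succ k ih =>
      obtain ⟨a, ha, hav⟩ := mem_evalP_prec_succ.1 hv
      filter_upwards [ih ha, hg hav] with i ha hav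
      exact mem_evalP_prec_succ.2 ⟨a, ha, hav⟩
  | rfind' cf hf =>
    rw [← Nat.pair_unpair n] at hv ⊢
    obtain ⟨m, hm, h0, hlt⟩ := mem_evalP_rfind.1 hv
    have hlt' : ∀ᶠ i in l, ∀ j ∈ Set.Iio m,
        ∃ w ∈ evalP (O i) cf (Nat.pair n.unpair.1 (j + n.unpair.2)), w ≠ 0 := by
      refine (eventually_all_finite (Set.finite_Iio m)).2 fun j hj => ?_
      obtain ⟨w, hw, hw0⟩ := hlt j hj
      exact (hf hw).mono fun i hw => ⟨w, hw, hw0⟩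
    filter_upwards [hf h0, hlt'] with i h0 hlt
    exact mem_evalP_rfind.2 ⟨m, hm, h0, hlt⟩

/-- A finite string as a partial oracle. -/
def strOracle (τ : List Bool) : ℕ →. ℕ := fun n => ((τ[n]?).map fun b => cond b 1 0 : Option ℕ)

theorem length_initSeg (X : Cantor) (k : ℕ) : (initSeg X k).length = k := by simp [initSeg]

theorem getElem?_initSeg (X : Cantor) (k n : ℕ) :
    (initSeg X k)[n]? = if n < k then some (X n) else none := by
  unfold initSeg
  rw [List.getElem?_map]
  split_ifs with h
  · rw [List.getElem?_range h]; rfl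
  · rw [List.getElem?_eq_none (by simpa using h)]; rfl

theorem take_initSeg (X : Cantor) {j k : ℕ} (h : j ≤ k) : (initSeg X k).take j = initSeg X j := by
  unfold initSeg
  rw [← List.map_take, List.take_range, min_eq_left h]

theorem initSeg_succ (X : Cantor) (k : ℕ) : initSeg X (k + 1) = initSeg X k ++ [X k] := by
  simp [initSeg, List.range_succ]

theorem mem_strOracle_initSeg {X : Cantor} {k n v : ℕ} :
    v ∈ strOracle (initSeg X k) n ↔ n < k ∧ v = oX X n := by
  rw [strOracle, getElem?_initSeg]
  split_ifs with h <;> simp [h, oX]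

theorem mem_eval_iff_exists_mem_evalP {X : Cantor} {c : CodeO} {n v : ℕ} :
    v ∈ c.eval (oX X) n ↔ ∃ k, v ∈ evalP (strOracle (initSeg X k)) c n := by
  rw [← evalP_coe]
  refine ⟨fun hv => (eventually_mem_evalP (l := atTop) (fun n v hv => ?_) hv).exists,
    fun ⟨k, hk⟩ => eventually_pure.1 <| eventually_mem_evalP (l := pure ())
      (O := fun _ => ↑(oX X)) (fun n v hv => ?_) hk⟩
  · filter_upwards [eventually_gt_atTop n] with k hk
    exact mem_strOracle_initSeg.2 ⟨hk, Part.mem_some_iff.1 hv⟩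
  · exact eventually_pure.2 ((mem_strOracle_initSeg.1 hv).2 ▸ Part.mem_some _)

end UsePrinciple

section Translation

open Nat.Partrec (Code)

theorem CodeO.encode_injective : Function.Injective CodeO.encode := by
  intro c
  induction c with
  | zero | succ | left | right | oracle =>
    intro d h
    cases d <;> simp only [CodeO.encode] at h <;> first | rfl | omega
  | pair cf cg hf hg | comp cf cg hf hg | prec cf cg hf hg =>
    intro d h
    cases d <;> simp only [CodeO.encode] at h <;> try omega
    rename_i a b
    have hab : Nat.pair cf.encode cg.encode = Nat.pair a.encode b.encode := by omega
    obtain ⟨ha, hb⟩ := Nat.pair_eq_pair.1 hab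
    rw [hf ha, hg hb]
  | rfind' cf hf =>
    intro d h
    cases d <;> simp only [CodeO.encode] at h <;> try omega
    rename_i a
    have ha : cf.encode = a.encode := by omega
    rw [hf ha]

theorem CodeO.encode_surjective : Function.Surjective CodeO.encode := by
  intro n
  induction n using Nat.strong_induction_on with
  | _ n ih =>
    rcases lt_or_ge n 5 with h | h
    · interval_cases n
      exacts [⟨.zero, rfl⟩, ⟨.succ, rfl⟩, ⟨.left, rfl⟩, ⟨.right, rfl⟩, ⟨.oracle, rfl⟩]
    · have hp : (n - 5) / 4 < n := by omega
      obtain ⟨a, ha⟩ := ih _ ((Nat.unpair_left_le ((n - 5) / 4)).trans_lt hp)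
      obtain ⟨b, hb⟩ := ih _ ((Nat.unpair_right_le ((n - 5) / 4)).trans_lt hp)
      obtain ⟨c, hc⟩ := ih _ hp
      have hab : Nat.pair a.encode b.encode = (n - 5) / 4 := by rw [ha, hb, Nat.pair_unpair]
      have hr : (n - 5) % 4 = 0 ∨ (n - 5) % 4 = 1 ∨ (n - 5) % 4 = 2 ∨ (n - 5) % 4 = 3 := by omega
      rcases hr with hr | hr | hr | hr
      · exact ⟨.pair a b, by rw [CodeO.encode]; omega⟩
      · exact ⟨.prec a b, by rw [CodeO.encode]; omega⟩
      · exact ⟨.comp a b, by rw [CodeO.encode]; omega⟩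
      · exact ⟨.rfind' c, by rw [CodeO.encode]; omega⟩

/-- The numbering of oracle codes, which is a bijection onto `ℕ`. -/
noncomputable def codeEquiv : CodeO ≃ ℕ :=
  Equiv.ofBijective CodeO.encode ⟨CodeO.encode_injective, CodeO.encode_surjective⟩

theorem codeEquiv_symm_encode (c : CodeO) : codeEquiv.symm c.encode = c :=
  codeEquiv.symm_apply_apply c

theorem encode_codeEquiv_symm (e : ℕ) : (codeEquiv.symm e).encode = e :=
  codeEquiv.apply_symm_apply e

theorem code_eval_comp (f g : Code) (n : ℕ) :
    (Code.comp f g).eval n = (g.eval n).bind fun m => f.eval m := rfl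

theorem code_eval_pair (f g : Code) (n : ℕ) :
    (Code.pair f g).eval n = (f.eval n).bind fun a => (g.eval n).map (Nat.pair a) := by
  simp [Code.eval, Seq.seq, Part.bind_map]

theorem code_eval_left (n : ℕ) : Code.left.eval n = Part.some n.unpair.1 := rfl

theorem code_eval_right (n : ℕ) : Code.right.eval n = Part.some n.unpair.2 := rfl

/-- A code for `((a, b), c) ↦ (a, (b, c))`. -/
def assocRight : Code := .pair (.comp .left .left) (.pair (.comp .right .left) .right)

/-- A code for `(a, (b, c)) ↦ ((a, b), c)`. -/
def assocLeft : Code := .pair (.pair .left (.comp .left .right)) (.comp .right .right)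

theorem eval_comp_assocRight (f : Code) (a b c : ℕ) :
    (Code.comp f assocRight).eval (Nat.pair (Nat.pair a b) c) =
      f.eval (Nat.pair a (Nat.pair b c)) := by
  simp [assocRight, code_eval_comp, code_eval_pair, code_eval_left, code_eval_right]

theorem eval_comp_assocLeft (f : Code) (a b c : ℕ) :
    (Code.comp f assocLeft).eval (Nat.pair a (Nat.pair b c)) =
      f.eval (Nat.pair (Nat.pair a b) c) := by
  simp [assocLeft, code_eval_comp, code_eval_pair, code_eval_left, code_eval_right]

theorem exists_code_strOracle : ∃ c : Code, ∀ (τ : List Bool) n,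
    c.eval (Nat.pair (Encodable.encode τ) n) = strOracle τ n := by
  have h : Computable fun m : ℕ => (Encodable.decode m.unpair.1 : Option (List Bool)).bind
      fun τ => (τ[m.unpair.2]?).map fun b => bif b then 1 else 0 := by fun_prop
  obtain ⟨c, hc⟩ := Code.exists_code.1 (Partrec.nat_iff.1 h.ofOption)
  exact ⟨c, fun τ n => by rw [hc]; simp [strOracle]⟩

/-- A code that, given the code of a string, queries the string as an oracle. -/
noncomputable def lookup : Code := exists_code_strOracle.choose

/-- Translation of an oracle code into an ordinary code that takes the code of a finite oracle as
an additional first argument. -/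
noncomputable def translate : CodeO → Code
  | .zero => .zero
  | .succ => .comp .succ .right
  | .left => .comp .left .right
  | .right => .comp .right .right
  | .oracle => lookup
  | .pair cf cg => .pair (translate cf) (translate cg)
  | .comp cf cg => .comp (translate cf) (.pair .left (translate cg))
  | .prec cf cg => .comp (.prec (translate cf) (.comp (translate cg) assocRight)) assocLeft
  | .rfind' cf => .comp (.rfind' (.comp (translate cf) assocRight)) assocLeft

theorem eval_translate (τ : List Bool) (c : CodeO) (n : ℕ) :
    (translate c).eval (Nat.pair (Encodable.encode τ) n) = evalP (strOracle τ) c n := by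
  induction c generalizing n with
  | zero => rfl
  | succ | left | right =>
    rw [translate, code_eval_comp, code_eval_right, Part.bind_some, Nat.unpair_pair]; rfl
  | oracle => exact exists_code_strOracle.choose_spec τ n
  | pair cf cg hf hg => simp only [translate, Code.eval, evalP, hf, hg]
  | comp cf cg hf hg =>
    ext v
    rw [mem_evalP_comp, translate, code_eval_comp, code_eval_pair, code_eval_left, hg]
    simp [hf]
  | prec cf cg hf hg =>
    rw [← Nat.pair_unpair n, translate, eval_comp_assocLeft]
    induction n.unpair.2 with
    | zero => rw [evalP_prec_zero, Code.eval_prec_zero, hf]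
    | succ k ih =>
      ext v
      rw [Code.eval_prec_succ, ih, mem_evalP_prec_succ]
      simp only [Part.bind_eq_bind, Part.mem_bind_iff, eval_comp_assocRight, hg]
  | rfind' cf hf =>
    rw [← Nat.pair_unpair n, translate, eval_comp_assocLeft]
    simp only [Code.eval, evalP, Nat.unpaired, Nat.unpair_pair]
    congr 2
    funext k
    exact congrArg _ ((eval_comp_assocRight ..).trans (hf _))

section Computable

variable {α : Type*} [Primcodable α] {f g : α → Code}

@[fun_prop] theorem computable_code_pair (hf : Computable f) (hg : Computable g) :
    Computable fun x => Code.pair (f x) (g x) := Code.primrec₂_pair.to_comp.comp hf hg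

@[fun_prop] theorem computable_code_comp (hf : Computable f) (hg : Computable g) :
    Computable fun x => Code.comp (f x) (g x) := Code.primrec₂_comp.to_comp.comp hf hg

@[fun_prop] theorem computable_code_prec (hf : Computable f) (hg : Computable g) :
    Computable fun x => Code.prec (f x) (g x) := Code.primrec₂_prec.to_comp.comp hf hg

@[fun_prop] theorem computable_code_rfind (hf : Computable f) :
    Computable fun x => Code.rfind' (f x) := Code.primrec_rfind'.to_comp.comp hf

end Computable

/-- The translation of the code with number `l.length`, given the list `l` of the translations of
all codes with smaller numbers. -/
noncomputable def translateStep (l : List Code) : Code :=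
  let q := (l.length - 5) / 4
  let r := (l.length - 5) % 4
  let a := (l[q.unpair.1]?).getD .zero
  let b := (l[q.unpair.2]?).getD .zero
  let c := (l[q]?).getD .zero
  ([Code.zero, .comp .succ .right, .comp .left .right, .comp .right .right, lookup][l.length]?).getD
    (([.pair a b, .comp (.prec a (.comp b assocRight)) assocLeft, .comp a (.pair .left b),
      .comp (.rfind' (.comp c assocRight)) assocLeft][r]?).getD .zero)

theorem computable_translateStep : Computable translateStep := by
  unfold translateStep
  fun_prop

theorem translateStep_of_mod {l : List Code} {q r : ℕ} (hl : l.length = 4 * q + r + 5)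
    (hr : r < 4) :
    translateStep l =
      let a := (l[q.unpair.1]?).getD .zero
      let b := (l[q.unpair.2]?).getD .zero
      let c := (l[q]?).getD .zero
      ([.pair a b, .comp (.prec a (.comp b assocRight)) assocLeft, .comp a (.pair .left b),
        .comp (.rfind' (.comp c assocRight)) assocLeft][r]?).getD .zero := by
  have hq : (l.length - 5) / 4 = q := by omega
  have hr : (l.length - 5) % 4 = r := by omega
  rw [translateStep, List.getElem?_eq_none (by simp; omega), hq, hr]
  rfl

theorem translateStep_eq {l : List Code} {c : CodeO} (hl : l.length = c.encode)
    (h : ∀ d : CodeO, d.encode < c.encode → (l[d.encode]?).getD .zero = translate d) :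
    translateStep l = translate c := by
  have hpair (a b : CodeO) (ha : Nat.pair a.encode b.encode < c.encode) :
      (l[a.encode]?).getD .zero = translate a ∧ (l[b.encode]?).getD .zero = translate b :=
    ⟨h a ((Nat.left_le_pair _ _).trans_lt ha), h b ((Nat.right_le_pair _ _).trans_lt ha)⟩
  cases c with simp only [CodeO.encode] at hl h hpair
  | zero | succ | left | right | oracle => simp [translateStep, hl, translate]
  | pair cf cg =>
    rw [translateStep_of_mod (r := 0) (hl.trans (by ring)) (by omega)]
    simp [hpair cf cg (by omega), translate]
  | prec cf cg =>
    rw [translateStep_of_mod (r := 1) (hl.trans (by ring)) (by omega)]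
    simp [hpair cf cg (by omega), translate]
  | comp cf cg =>
    rw [translateStep_of_mod (r := 2) (hl.trans (by ring)) (by omega)]
    simp [hpair cf cg (by omega), translate]
  | rfind' cf =>
    rw [translateStep_of_mod (r := 3) (hl.trans (by ring)) (by omega)]
    simp [h cf (by omega), translate]

theorem computable_translate : Computable fun e => translate (codeEquiv.symm e) := by
  have hs : Computable₂ fun (_ : Unit) (l : List Code) => some (translateStep l) :=
    Computable.option_some.comp (computable_translateStep.comp Computable.snd)
  refine (Computable.nat_strong_rec (fun _ e => translate (codeEquiv.symm e)) hs
    fun _ e => congrArg some ?_).comp (Computable.const ()) Computable.id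
  refine translateStep_eq (by simp [encode_codeEquiv_symm]) fun d hd => ?_
  rw [encode_codeEquiv_symm] at hd
  simp [List.getElem?_range hd, codeEquiv_symm_encode]

/-- Step-bounded evaluation of the `e`-th oracle code with a finite oracle. The length of the
string `τ` encodes a pair consisting of the length of the prefix of `τ` serving as oracle and of
the number of steps, so that a single quantifier over initial segments searches for both. -/
noncomputable def evalS (e : ℕ) (τ : List Bool) (n : ℕ) : Option ℕ :=
  Code.evaln τ.length.unpair.2 (translate (codeEquiv.symm e))
    (Nat.pair (Encodable.encode (τ.take τ.length.unpair.1)) n)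

@[fun_prop] theorem computable_evalS {α : Type*} [Primcodable α] {e : α → ℕ} {τ : α → List Bool}
    {n : α → ℕ} (he : Computable e) (hτ : Computable τ) (hn : Computable n) :
    Computable fun x => evalS (e x) (τ x) (n x) := by
  have ht := computable_translate.comp he
  have : Computable fun x => (((τ x).length.unpair.2, translate (codeEquiv.symm (e x))),
      Nat.pair (Encodable.encode ((τ x).take (τ x).length.unpair.1)) (n x)) := by fun_prop
  exact Code.primrec_evaln.to_comp.comp this

theorem mem_eval_iff_exists_evalS {X : Cantor} {c : CodeO} {n v : ℕ} :
    v ∈ c.eval (oX X) n ↔ ∃ k, evalS c.encode (initSeg X k) n = some v := by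
  have hS (k t : ℕ) : evalS c.encode (initSeg X (Nat.pair k t)) n =
      Code.evaln t (translate c) (Nat.pair (Encodable.encode (initSeg X k)) n) := by
    rw [evalS, length_initSeg, Nat.unpair_pair, codeEquiv_symm_encode,
      take_initSeg _ (Nat.left_le_pair _ _)]
  have hP (k : ℕ) : v ∈ evalP (strOracle (initSeg X k)) c n ↔
      ∃ t, evalS c.encode (initSeg X (Nat.pair k t)) n = some v := by
    simp only [hS, ← eval_translate, Code.evaln_complete, Option.mem_def]
  rw [mem_eval_iff_exists_mem_evalP]
  refine ⟨fun ⟨k, hk⟩ => ((hP k).1 hk).imp' (Nat.pair k) fun _ => id, fun ⟨k, hk⟩ => ?_⟩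
  exact ⟨k.unpair.1, (hP _).2 ⟨k.unpair.2, by rwa [Nat.pair_unpair]⟩⟩

end Translation

section OracleMachine

open Nat.Partrec (Code)

theorem eval_comp (O : ℕ → ℕ) (f g : CodeO) (n : ℕ) :
    (CodeO.comp f g).eval O n = (g.eval O n).bind fun m => f.eval O m := rfl

theorem eval_pair (O : ℕ → ℕ) (f g : CodeO) (n : ℕ) : (CodeO.pair f g).eval O n =
    (f.eval O n).bind fun a => (g.eval O n).map (Nat.pair a) := by
  simp [CodeO.eval, Seq.seq, Part.bind_map]

theorem eval_left (O : ℕ → ℕ) (n : ℕ) : CodeO.left.eval O n = Part.some n.unpair.1 := rfl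

theorem eval_right (O : ℕ → ℕ) (n : ℕ) : CodeO.right.eval O n = Part.some n.unpair.2 := rfl

theorem eval_zero (O : ℕ → ℕ) (n : ℕ) : CodeO.zero.eval O n = Part.some 0 := rfl

theorem eval_oracle (O : ℕ → ℕ) (n : ℕ) : CodeO.oracle.eval O n = Part.some (O n) := rfl

/-- An ordinary code as an oracle code that makes no queries. -/
def ofCode : Code → CodeO
  | .zero => .zero
  | .succ => .succ
  | .left => .left
  | .right => .right
  | .pair cf cg => .pair (ofCode cf) (ofCode cg)
  | .comp cf cg => .comp (ofCode cf) (ofCode cg)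
  | .prec cf cg => .prec (ofCode cf) (ofCode cg)
  | .rfind' cf => .rfind' (ofCode cf)

theorem eval_ofCode (O : ℕ → ℕ) (c : Code) : (ofCode c).eval O = c.eval := by
  induction c with
  | zero | succ | left | right => rfl
  | pair _ _ hf hg | comp _ _ hf hg | prec _ _ hf hg =>
    simp only [ofCode, Code.eval, CodeO.eval, hf, hg]; rfl
  | rfind' _ hf => simp only [ofCode, Code.eval, CodeO.eval, hf]; simp; rfl

theorem exists_codeO_of_computable {f : ℕ → ℕ} (hf : Computable f) :
    ∃ c : CodeO, ∀ O n, c.eval O n = Part.some (f n) := by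
  obtain ⟨c, hc⟩ := Code.exists_code.1 (Partrec.nat_iff.1 hf.partrec)
  exact ⟨ofCode c, fun O n => by rw [eval_ofCode, hc]; rfl⟩

theorem exists_codeO_initSeg : ∃ c : CodeO, ∀ X a k,
    c.eval (oX X) (Nat.pair a k) = Part.some (Encodable.encode (initSeg X k)) := by
  have happend : Computable fun m : ℕ => Encodable.encode
      (((Encodable.decode m.unpair.1 : Option (List Bool)).getD []) ++
        [decide (m.unpair.2 = 1)]) := by fun_prop
  obtain ⟨d, hd⟩ := exists_codeO_of_computable happend
  obtain ⟨z, hz⟩ :=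
    exists_codeO_of_computable (Computable.const (Encodable.encode ([] : List Bool)))
  refine ⟨.prec z (.comp d (.pair (.comp .right .right) (.comp .oracle (.comp .left .right)))),
    fun X a k => ?_⟩
  rw [← evalP_coe]
  induction k with
  | zero => rw [evalP_prec_zero, evalP_coe, hz]; rfl
  | succ k ih =>
    refine Part.eq_some_iff.2 (mem_evalP_prec_succ.2 ⟨_, Part.eq_some_iff.1 ih, ?_⟩)
    have hbit : decide (oX X k = 1) = X k := by unfold oX; cases X k <;> rfl
    simp [evalP_coe, eval_comp, eval_pair, eval_left, eval_right, eval_oracle, hd, hbit,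
      initSeg_succ]

theorem exists_codeO_initSeg_of_computable {f : List Bool → ℕ → ℕ}
    (hf : Computable fun p : List Bool × ℕ => f p.1 p.2) :
    ∃ c : CodeO, ∀ X n k, c.eval (oX X) (Nat.pair n k) = Part.some (f (initSeg X k) n) := by
  have h : Computable fun m : ℕ =>
      f ((Encodable.decode m.unpair.1 : Option (List Bool)).getD []) m.unpair.2 := by fun_prop
  obtain ⟨s, hs⟩ := exists_codeO_initSeg
  obtain ⟨c, hc⟩ := exists_codeO_of_computable h
  exact ⟨.comp c (.pair s .left), fun X n k => by simp [eval_comp, eval_pair, eval_left, hs, hc]⟩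

theorem exists_codeO_find {p : List Bool → ℕ → Bool}
    (hp : Computable fun q : List Bool × ℕ => p q.1 q.2) :
    ∃ c : CodeO, ∀ X n k, k ∈ c.eval (oX X) n ↔
      p (initSeg X k) n = true ∧ ∀ j < k, p (initSeg X j) n = false := by
  obtain ⟨c, hc⟩ := exists_codeO_initSeg_of_computable (f := fun τ n => bif p τ n then 0 else 1)
    (by fun_prop)
  refine ⟨.comp (.rfind' c) (.pair (.pair .left .right) .zero), fun X n k => ?_⟩
  have hstart : (CodeO.pair (.pair .left .right) .zero).eval (oX X) n =
      Part.some (Nat.pair n 0) := by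
    simp [eval_pair, eval_left, eval_right, eval_zero]
  have hne (b : Bool) : (bif b then 0 else 1) = 0 ↔ b = true := by cases b <;> simp
  rw [eval_comp, hstart, Part.bind_some, ← evalP_coe, mem_evalP_rfind]
  simp [evalP_coe, hc, @eq_comm ℕ 0, hne]

theorem exists_codeO_of_initSeg {g : List Bool → ℕ → Option ℕ}
    (hg : Computable fun p : List Bool × ℕ => g p.1 p.2) :
    ∃ c : CodeO, ∀ X n, ((c.eval (oX X) n).Dom ↔ ∃ k, (g (initSeg X k) n).isSome) ∧
      ∀ v ∈ c.eval (oX X) n, ∃ k, g (initSeg X k) n = some v := by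
  obtain ⟨f, hf⟩ := exists_codeO_find (p := fun τ n => (g τ n).isSome) (by fun_prop)
  obtain ⟨o, ho⟩ := exists_codeO_initSeg_of_computable (f := fun τ n => (g τ n).getD 0)
    (by fun_prop)
  refine ⟨.comp o (.pair (.pair .left .right) f), fun X n => ?_⟩
  have heval : (CodeO.comp o (.pair (.pair .left .right) f)).eval (oX X) n =
      (f.eval (oX X) n).map fun k => (g (initSeg X k) n).getD 0 := by
    simp [eval_comp, eval_pair, eval_left, eval_right, Part.bind_map, ho, Part.bind_some_eq_map]
  rw [heval]
  refine ⟨⟨fun h : (f.eval (oX X) n).Dom => ⟨_, ((hf X n _).1 (Part.get_mem h)).1⟩,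
    fun h => ?_⟩, fun v hv => ?_⟩
  · exact Part.dom_iff_mem.2 ⟨_, Part.mem_map _ ((hf X n (Nat.find h)).2
      ⟨Nat.find_spec h, fun j hj => Bool.eq_false_iff.2 (Nat.find_min h hj)⟩)⟩
  · obtain ⟨k, hk, rfl⟩ := (Part.mem_map_iff _).1 hv
    obtain ⟨w, hw⟩ := Option.isSome_iff_exists.1 ((hf X n k).1 hk).1
    exact ⟨k, by rw [hw]; rfl⟩

end OracleMachine

section HaltingProblem

open Filter

/-- The halting problem `∅'` as an element of Cantor space. -/
noncomputable def haltingSeq : Cantor := fun e => decide (iterJump 1 e = 1)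

theorem iterJump_one : iterJump 1 = oX haltingSeq := by
  funext e
  unfold oX haltingSeq iterJump jump
  split_ifs <;> simp

/-- The `e`-th machine with the zero oracle halts on input `e` within the resources allotted to
stage `t` of its step-bounded evaluation. This is not monotone in `t`. -/
noncomputable def haltsAt (e t : ℕ) : Bool := (evalS e (initSeg (fun _ => false) t) e).isSome

theorem haltingSeq_encode (c : CodeO) :
    haltingSeq c.encode = true ↔ (c.eval (oX fun _ => false) c.encode).Dom := by
  have h : (∃ d : CodeO, d.encode = c.encode ∧ (d.eval (iterJump 0) c.encode).Dom) ↔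
      (c.eval (oX fun _ => false) c.encode).Dom :=
    ⟨fun ⟨d, hd, h⟩ => CodeO.encode_injective hd ▸ h, fun h => ⟨c, rfl, h⟩⟩
  rw [haltingSeq, decide_eq_true_iff, iterJump, jump, h]
  split_ifs with hdom <;> simp [hdom]

theorem dom_eval_iff_exists_evalS {X : Cantor} {c : CodeO} {n : ℕ} :
    (c.eval (oX X) n).Dom ↔ ∃ k, (evalS c.encode (initSeg X k) n).isSome := by
  simp only [Part.dom_iff_mem, mem_eval_iff_exists_evalS, Option.isSome_iff_exists]
  exact exists_comm

theorem haltingSeq_iff_exists_haltsAt (e : ℕ) :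
    haltingSeq e = true ↔ ∃ t, haltsAt e t = true := by
  rw [← encode_codeEquiv_symm e, haltingSeq_encode, dom_eval_iff_exists_evalS]
  rfl

variable {α β : Type*} [Primcodable α] [Primcodable β]

@[fun_prop] theorem computable_haltsAt {e t : α → ℕ} (he : Computable e) (ht : Computable t) :
    Computable fun x => haltsAt (e x) (t x) := by
  have h (t : ℕ) : initSeg (fun _ => false) t = List.replicate t false := by simp [initSeg]
  simp only [haltsAt, h]
  fun_prop

/-- A predicate that is computably enumerable relative to the halting problem. -/
def JumpCe (p : α → Prop) : Prop :=
  ∃ P : List Bool → α → Bool, (Computable fun z : List Bool × α => P z.1 z.2) ∧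
    ∀ x, p x ↔ ∃ k, P (initSeg haltingSeq k) x = true

/-- A `Σ₂` predicate. -/
def SigmaTwo (p : α → Prop) : Prop :=
  ∃ R : α → ℕ → ℕ → Bool, (Computable fun z : α × ℕ × ℕ => R z.1 z.2.1 z.2.2) ∧
    ∀ x, p x ↔ ∃ a, ∀ b, R x a b = true

theorem any_range_take_initSeg {P : List Bool → Bool} {X : Cantor} {k : ℕ} :
    ((List.range ((initSeg X k).length + 1)).any fun i => P ((initSeg X k).take i)) = true ↔
      ∃ i ≤ k, P (initSeg X i) = true := by
  simp only [List.any_eq_true, List.mem_range, length_initSeg, Nat.lt_succ_iff]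
  exact exists_congr fun i => and_congr_right fun hi => by rw [take_initSeg X hi]

theorem JumpCe.congr {p q : α → Prop} (h : JumpCe p) (hpq : ∀ x, q x ↔ p x) : JumpCe q := by
  rwa [show q = p from funext fun x => propext (hpq x)]

theorem JumpCe.exists_monotone {p : α → Prop} (h : JumpCe p) :
    ∃ P : List Bool → α → Bool, (Computable fun z : List Bool × α => P z.1 z.2) ∧
      (∀ x, p x ↔ ∃ k, P (initSeg haltingSeq k) x = true) ∧
      ∀ x k l, k ≤ l → P (initSeg haltingSeq k) x = true → P (initSeg haltingSeq l) x = true := by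
  obtain ⟨P, hP, hp⟩ := h
  refine ⟨fun τ x => (List.range (τ.length + 1)).any fun i => P (τ.take i) x, by fun_prop,
    fun x => ?_, fun x k l hkl => ?_⟩
  · simp only [hp, any_range_take_initSeg (P := (P · x))]
    exact ⟨fun ⟨k, hk⟩ => ⟨k, k, le_rfl, hk⟩, fun ⟨_, i, _, h⟩ => ⟨i, h⟩⟩
  · simp only [any_range_take_initSeg (P := (P · x))]
    exact fun ⟨i, hi, h⟩ => ⟨i, hi.trans hkl, h⟩

theorem JumpCe.comp {p : β → Prop} (h : JumpCe p) {f : α → β} (hf : Computable f) :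
    JumpCe fun x => p (f x) := by
  obtain ⟨P, hP, hp⟩ := h
  exact ⟨fun τ x => P τ (f x), by fun_prop, fun x => hp (f x)⟩

theorem SigmaTwo.comp {p : β → Prop} (h : SigmaTwo p) {f : α → β} (hf : Computable f) :
    SigmaTwo fun x => p (f x) := by
  obtain ⟨R, hR, hp⟩ := h
  exact ⟨fun x => R (f x), by fun_prop, fun x => hp (f x)⟩

theorem ceIn_iterJump_one_iff {p : ℕ → Prop} : CeIn (iterJump 1) {m | p m} ↔ JumpCe p := by
  rw [iterJump_one]
  constructor
  · rintro ⟨c, hc⟩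
    refine ⟨fun τ m => (evalS c.encode τ m).isSome, by fun_prop, fun m => ?_⟩
    exact (Set.ext_iff.1 hc m).trans dom_eval_iff_exists_evalS
  · rintro ⟨P, hP, hp⟩
    obtain ⟨c, hc⟩ := exists_codeO_of_initSeg (g := fun τ m => bif P τ m then some 0 else none)
      (by fun_prop)
    refine ⟨c, Set.ext fun m => (hp m).trans (Iff.trans ?_ (hc haltingSeq m).1.symm)⟩
    exact exists_congr fun k => by cases P (initSeg haltingSeq k) m <;> simp

theorem rightCeIn_iterJump_one_iff {r : ℝ} :
    RightCeIn (iterJump 1) r ↔ JumpCe fun q : ℚ => r < q := by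
  rw [RightCeIn, ceIn_iterJump_one_iff]
  constructor
  · intro h
    refine (h.comp (f := fun q : ℚ => Encodable.encode q) (by fun_prop)).congr fun q => ?_
    exact ⟨fun hq => ⟨q, rfl, hq⟩, fun ⟨q', h, hq⟩ => Encodable.encode_injective h ▸ hq⟩
  · rintro ⟨P, hP, hp⟩
    refine ⟨fun τ m => (Encodable.decode m : Option ℚ).elim false (P τ), by fun_prop, fun m => ?_⟩
    constructor
    · rintro ⟨q, rfl, h⟩
      simpa using (hp q).1 h
    · rintro ⟨k, hk⟩
      cases hq : (Encodable.decode m : Option ℚ) with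
      | none => simp [hq] at hk
      | some q => exact ⟨q, encode_eq_of_decode_rat hq, (hp q).2 ⟨k, by simpa [hq] using hk⟩⟩

theorem sigmaTwo_of_exists_forall {p : α → Prop} {R : α → β → ℕ → Bool}
    (hR : Computable fun z : α × β × ℕ => R z.1 z.2.1 z.2.2)
    (hp : ∀ x, p x ↔ ∃ y, ∀ b, R x y b = true) : SigmaTwo p := by
  refine ⟨fun x a b => (Encodable.decode a : Option β).elim false fun y => R x y b, by fun_prop,
    fun x => (hp x).trans ⟨fun ⟨y, hy⟩ => ⟨Encodable.encode y, by simpa using hy⟩, ?_⟩⟩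
  rintro ⟨a, ha⟩
  cases hy : (Encodable.decode a : Option β) with
  | none => simp [hy] at ha
  | some y => exact ⟨y, by simpa [hy] using ha⟩

theorem eq_initSeg_iff {X : Cantor} {τ : List Bool} :
    τ = initSeg X τ.length ↔ ∀ i < τ.length, (τ[i]?).getD false = X i := by
  rw [List.ext_getElem?_iff]
  refine forall_congr' fun i => ?_
  rw [getElem?_initSeg]
  by_cases hi : i < τ.length
  · simp [hi]
  · simp [hi]

/-- The string `τ` is consistent at stage `b` with being an initial segment of the halting problem,
its positive entries having been witnessed before stage `T`. -/
noncomputable def consistentAt (τ : List Bool) (T b : ℕ) : Bool :=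
  (List.range τ.length).all fun i =>
    bif (τ[i]?).getD false then (List.range T).any (haltsAt i) else !(haltsAt i b)

@[fun_prop] theorem computable_consistentAt {τ : α → List Bool} {T b : α → ℕ} (hτ : Computable τ)
    (hT : Computable T) (hb : Computable b) :
    Computable fun x => consistentAt (τ x) (T x) (b x) := by
  unfold consistentAt; fun_prop

theorem eq_initSeg_haltingSeq_iff {τ : List Bool} :
    τ = initSeg haltingSeq τ.length ↔ ∃ T, ∀ b, consistentAt τ T b = true := by
  simp only [consistentAt, List.all_eq_true, List.mem_range, eq_initSeg_iff]
  constructor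
  · intro h
    have hT : ∀ᶠ T in atTop, ∀ i ∈ Set.Iio τ.length, haltingSeq i = true →
        (List.range T).any (haltsAt i) = true := by
      refine (eventually_all_finite (Set.finite_Iio _)).2 fun i _ => ?_
      by_cases hi : haltingSeq i = true
      · obtain ⟨t, ht⟩ := (haltingSeq_iff_exists_haltsAt i).1 hi
        filter_upwards [eventually_gt_atTop t] with T hT _
        exact List.any_eq_true.2 ⟨t, List.mem_range.2 hT, ht⟩
      · exact .of_forall fun _ hi' => absurd hi' hi
    obtain ⟨T, hT⟩ := hT.exists
    refine ⟨T, fun b i hi => ?_⟩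
    rw [h i hi]
    cases hX : haltingSeq i with
    | true => exact hT i hi hX
    | false =>
      have hb : ¬ haltsAt i b = true := fun hb =>
        Bool.eq_false_iff.1 hX ((haltingSeq_iff_exists_haltsAt i).2 ⟨b, hb⟩)
      simpa using hb
  · rintro ⟨T, hT⟩ i hi
    rw [Bool.eq_iff_iff, haltingSeq_iff_exists_haltsAt]
    cases hτ : (τ[i]?).getD false with
    | true =>
      obtain ⟨t, -, ht⟩ : ∃ t < T, haltsAt i t = true := by simpa [hτ] using hT 0 i hi
      exact iff_of_true rfl ⟨t, ht⟩
    | false => simpa [hτ] using fun b => hT b i hi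

theorem JumpCe.sigmaTwo {p : α → Prop} (h : JumpCe p) : SigmaTwo p := by
  obtain ⟨P, hP, hp⟩ := h
  refine sigmaTwo_of_exists_forall (β := List Bool × ℕ)
    (R := fun x y b => P y.1 x && consistentAt y.1 y.2 b) (by fun_prop) fun x => ?_
  simp only [hp, Bool.and_eq_true, Prod.exists, forall_and, forall_const]
  simp only [exists_and_left, ← eq_initSeg_haltingSeq_iff]
  exact ⟨fun ⟨k, hk⟩ => ⟨_, hk, by rw [length_initSeg]⟩, fun ⟨τ, hτ, h⟩ => ⟨_, h ▸ hτ⟩⟩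

/-- A code for the constant function with value `n`. -/
def constCode : ℕ → CodeO
  | 0 => .zero
  | n + 1 => .comp .succ (constCode n)

theorem eval_constCode (O : ℕ → ℕ) (n m : ℕ) : (constCode n).eval O m = Part.some n := by
  induction n with
  | zero => rfl
  | succ n ih => rw [constCode, eval_comp, ih, Part.bind_some]; rfl

@[fun_prop] theorem computable_encode_constCode {f : α → ℕ} (hf : Computable f) :
    Computable fun x => (constCode (f x)).encode := by
  have hrec (n : ℕ) : (constCode n).encode =
      Nat.rec 0 (fun _ r => 2 * (2 * Nat.pair 1 r + 1) + 5) n := by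
    induction n with
    | zero => rfl
    | succ n ih => simp only [constCode, CodeO.encode, ih]
  simp only [hrec]
  fun_prop

theorem exists_computable_haltingSeq_iff {R : α → ℕ → Bool}
    (hR : Computable fun z : α × ℕ => R z.1 z.2) :
    ∃ e : α → ℕ, Computable e ∧ ∀ x, haltingSeq (e x) = true ↔ ∃ b, R x b = true := by
  obtain ⟨c, hc⟩ := exists_codeO_of_initSeg (g := fun τ m =>
    (Encodable.decode m : Option α).bind fun x => bif R x τ.length then some 0 else none)
    (by fun_prop)
  refine ⟨fun x => (CodeO.comp c (constCode (Encodable.encode x))).encode, ?_, fun x => ?_⟩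
  · simp only [CodeO.encode]
    fun_prop
  · rw [haltingSeq_encode, eval_comp, eval_constCode, Part.bind_some, (hc _ _).1]
    refine exists_congr fun k => ?_
    rw [length_initSeg, Encodable.encodek, Option.bind_some]
    cases R x k <;> simp

theorem SigmaTwo.jumpCe {p : α → Prop} (h : SigmaTwo p) : JumpCe p := by
  obtain ⟨R, hR, hp⟩ := h
  obtain ⟨e, he, hR'⟩ := exists_computable_haltingSeq_iff (α := α × ℕ)
    (R := fun y b => !(R y.1 y.2 b)) (by fun_prop)
  refine ⟨fun τ x => (List.range τ.length).any fun a => !((τ[e (x, a)]?).getD true),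
    by fun_prop, fun x => ?_⟩
  have hall (a : ℕ) : (∀ b, R x a b = true) ↔ haltingSeq (e (x, a)) = false := by
    rw [← Bool.not_eq_true, hR']
    simp
  simp only [hp, hall, List.any_eq_true, List.mem_range, length_initSeg, getElem?_initSeg]
  constructor
  · rintro ⟨a, ha⟩
    exact ⟨a + e (x, a) + 1, a, by omega, by simp [ha, show e (x, a) < a + e (x, a) + 1 by omega]⟩
  · rintro ⟨k, a, -, h⟩
    refine ⟨a, ?_⟩
    split_ifs at h with hk
    · simpa using h
    · simp at h

end HaltingProblem

section Approximation

open Filter Topology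

variable {α σ : Type*}

/-- Primitive recursion along a string: the step at stage `s` sees the first `s` bits. -/
def runAlong (init : α → σ) (step : α → List Bool → σ → σ) (x : α) (τ : List Bool) : σ :=
  Nat.rec (motive := fun _ => σ) (init x) (fun s r => step x (τ.take s) r) τ.length

theorem runAlong_initSeg_succ (init : α → σ) (step : α → List Bool → σ → σ) (x : α) (X : Cantor)
    (k : ℕ) : runAlong init step x (initSeg X (k + 1)) =
      step x (initSeg X k) (runAlong init step x (initSeg X k)) := by
  have key (k j : ℕ) (hj : j ≤ k) : Nat.rec (motive := fun _ => σ) (init x)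
      (fun s r => step x ((initSeg X k).take s) r) j =
      Nat.rec (motive := fun _ => σ) (init x) (fun s r => step x (initSeg X s) r) j := by
    induction j with
    | zero => rfl
    | succ j ih => simp only [ih (by omega), take_initSeg X (show j ≤ k by omega)]
  unfold runAlong
  rw [length_initSeg, length_initSeg, key k k le_rfl]
  exact key (k + 1) (k + 1) le_rfl

variable [Primcodable α]

theorem computable_runAlong [Primcodable σ] {init : α → σ} {step : α → List Bool → σ → σ}
    (hinit : Computable init)
    (hstep : Computable fun z : α × List Bool × σ => step z.1 z.2.1 z.2.2) :
    Computable fun z : α × List Bool => runAlong init step z.1 z.2 := by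
  unfold runAlong
  fun_prop

/-- `A` approximates `r` strictly from above: `A k ↓ r`. -/
structure DecreasesTo (A : ℕ → ℚ) (r : ℝ) : Prop where
  antitone : Antitone A
  lt (k : ℕ) : r < A k
  tendsto : Tendsto (fun k => (A k : ℝ)) atTop (𝓝 r)

theorem DecreasesTo.of_forall_exists_lt {A : ℕ → ℚ} {r : ℝ} (hA : Antitone A)
    (hlt : ∀ k, r < A k) (h : ∀ b, r < b → ∃ k, (A k : ℝ) < b) : DecreasesTo A r := by
  refine ⟨hA, hlt, tendsto_order.2 ⟨fun a ha => .of_forall fun k => ha.trans (hlt k),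
    fun b hb => ?_⟩⟩
  obtain ⟨k, hk⟩ := h b hb
  filter_upwards [eventually_ge_atTop k] with l hl
  exact lt_of_le_of_lt (by exact_mod_cast hA hl) hk

theorem exists_computable_decreasesTo {γ : α → ℝ} (h : JumpCe fun z : α × ℚ => γ z.1 < z.2)
    (K : ℚ) (hK : ∀ x, γ x < K) :
    ∃ A : α → List Bool → ℚ, (Computable fun z : α × List Bool => A z.1 z.2) ∧
      ∀ x, A x [] = K ∧ DecreasesTo (fun k => A x (initSeg haltingSeq k)) (γ x) := by
  obtain ⟨P, hP, hp, hmono⟩ := h.exists_monotone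
  let step (x : α) (τ : List Bool) (r : ℚ) : ℚ :=
    bif P τ (x, decodeRat τ.length.unpair.1) then min r (decodeRat τ.length.unpair.1) else r
  have hstep : Computable fun z : α × List Bool × ℚ => step z.1 z.2.1 z.2.2 := by
    unfold step; fun_prop
  let A := runAlong (fun _ => K) step
  have hsucc (x : α) (k : ℕ) : A x (initSeg haltingSeq (k + 1)) =
      bif P (initSeg haltingSeq k) (x, decodeRat k.unpair.1)
        then min (A x (initSeg haltingSeq k)) (decodeRat k.unpair.1)
        else A x (initSeg haltingSeq k) :=
    (runAlong_initSeg_succ _ step x haltingSeq k).trans (by simp only [step, length_initSeg]; rfl)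
  refine ⟨A, computable_runAlong (Computable.const K) hstep, fun x => ⟨rfl, ?_⟩⟩
  refine .of_forall_exists_lt (antitone_nat_of_succ_le fun k => ?_) (fun k => ?_) fun b hb => ?_
  · rw [hsucc]
    cases P (initSeg haltingSeq k) (x, decodeRat k.unpair.1)
    · exact le_rfl
    · exact min_le_left _ _
  · induction k with
    | zero => exact hK x
    | succ k ih =>
      rw [hsucc]
      cases hk : P (initSeg haltingSeq k) (x, decodeRat k.unpair.1)
      · exact ih
      · rw [cond_true, Rat.cast_min]
        exact lt_min ih ((hp _).2 ⟨k, hk⟩)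
  · obtain ⟨q, hq, hqb⟩ := exists_rat_btwn hb
    obtain ⟨k, hk⟩ := (hp (x, q)).1 hq
    refine ⟨Nat.pair (Encodable.encode q) k + 1, lt_of_le_of_lt ?_ hqb⟩
    have hk' := hmono _ _ _ (Nat.right_le_pair (Encodable.encode q) k) hk
    rw [hsucc, Nat.unpair_pair, decodeRat_encode, hk', cond_true]
    exact_mod_cast min_le_right _ _

theorem jumpCe_exists_lt {B : α → List Bool → ℚ}
    (hB : Computable fun z : α × List Bool => B z.1 z.2) :
    JumpCe fun z : α × ℚ => ∃ k, B z.1 (initSeg haltingSeq k) < z.2 :=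
  ⟨fun τ z => decide (B z.1 τ < z.2), by fun_prop, fun z => by simp⟩

end Approximation

section Strings

/-- The natural number with binary expansion `τ`, most significant bit first. -/
def binVal (τ : List Bool) : ℕ := τ.foldl (fun a b => 2 * a + cond b 1 0) 0

theorem binVal_append_singleton (τ : List Bool) (b : Bool) :
    binVal (τ ++ [b]) = 2 * binVal τ + cond b 1 0 := by
  simp [binVal]

@[fun_prop] theorem computable_binVal {α : Type*} [Primcodable α] {f : α → List Bool}
    (hf : Computable f) : Computable fun x => binVal (f x) := by
  have h : Primrec binVal := Primrec.list_foldl (f := id) (g := fun _ => 0)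
    (h := fun _ z => 2 * z.1 + cond z.2 1 0) Primrec.id (Primrec.const 0)
    (Primrec.nat_add.comp (Primrec.nat_mul.comp (Primrec.const 2) (Primrec.fst.comp Primrec.snd))
      (Primrec.cond (Primrec.snd.comp Primrec.snd) (Primrec.const 1) (Primrec.const 0)))
  exact h.to_comp.comp hf

/-- The string of the last `s` binary digits of `j`, most significant bit first. -/
def binStr (s j : ℕ) : List Bool :=
  (List.range s).map fun i => decide (j / 2 ^ (s - 1 - i) % 2 = 1)

@[fun_prop] theorem computable_binStr {α : Type*} [Primcodable α] {f g : α → ℕ}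
    (hf : Computable f) (hg : Computable g) : Computable fun x => binStr (f x) (g x) := by
  unfold binStr
  fun_prop

theorem length_binStr (s j : ℕ) : (binStr s j).length = s := by simp [binStr]

theorem binStr_succ (s j : ℕ) : binStr (s + 1) j = binStr s (j / 2) ++ [decide (j % 2 = 1)] := by
  rw [binStr, binStr, List.range_succ, List.map_append]
  congr 1
  · refine List.map_congr_left fun i hi => ?_
    rw [Nat.div_div_eq_div_mul, ← pow_succ',
      show s - 1 - i + 1 = s + 1 - 1 - i by have := List.mem_range.1 hi; omega]
  · simp

theorem binVal_lt (τ : List Bool) : binVal τ < 2 ^ τ.length := by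
  induction τ using List.reverseRecOn with
  | nil => simp [binVal]
  | append_singleton τ b ih =>
    rw [binVal_append_singleton, List.length_append, List.length_singleton, pow_succ]
    cases b <;> simp <;> omega

theorem binStr_binVal (τ : List Bool) : binStr τ.length (binVal τ) = τ := by
  induction τ using List.reverseRecOn with
  | nil => rfl
  | append_singleton τ b ih =>
    rw [List.length_append, List.length_singleton, binStr_succ, binVal_append_singleton]
    cases b
    · simpa using ih
    · simpa [show (2 * binVal τ + 1) / 2 = binVal τ by omega] using ih

theorem binVal_binStr {s j : ℕ} (hj : j < 2 ^ s) : binVal (binStr s j) = j := by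
  induction s generalizing j with
  | zero => simp_all [binStr, binVal]
  | succ s ih =>
    rw [binStr_succ, binVal_append_singleton, ih (by rw [pow_succ] at hj; omega)]
    by_cases h : j % 2 = 1 <;> simp [h] <;> omega

theorem prepend_apply_add (ρ : List Bool) (X : Cantor) (n : ℕ) :
    prepend ρ X (ρ.length + n) = X n := by
  simp [prepend]

theorem initSeg_add (X : Cantor) (m n : ℕ) :
    initSeg X (m + n) = initSeg X m ++ initSeg (fun i => X (m + i)) n := by
  simp only [initSeg, List.range_add, List.map_append, List.map_map]
  rfl

theorem initSeg_prepend_length (ρ : List Bool) (X : Cantor) :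
    initSeg (prepend ρ X) ρ.length = ρ := by
  refine List.ext_getElem (length_initSeg _ _) fun i hi hi' => ?_
  simp [initSeg, prepend, hi']

theorem initSeg_prepend (ρ : List Bool) (X : Cantor) (k : ℕ) :
    initSeg (prepend ρ X) (ρ.length + k) = ρ ++ initSeg X k := by
  rw [initSeg_add, initSeg_prepend_length]
  simp only [prepend_apply_add]

theorem prepend_initSeg (X : Cantor) (n : ℕ) : prepend (initSeg X n) (fun i => X (n + i)) = X := by
  funext i
  unfold prepend
  rw [length_initSeg, List.getD_eq_getElem?_getD, getElem?_initSeg]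
  split_ifs with hi
  · rfl
  · exact congrArg X (Nat.add_sub_cancel' (not_lt.1 hi))

theorem Extends.exists_eq_prepend {ρ : List Bool} {X : Cantor} (h : Extends X ρ) :
    ∃ Y, X = prepend ρ Y := by
  rw [← show initSeg X ρ.length = ρ from h]
  exact ⟨_, (prepend_initSeg X _).symm⟩

theorem prepend_append (ρ τ : List Bool) (X : Cantor) :
    prepend (ρ ++ τ) X = prepend ρ (prepend τ X) := by
  funext n
  rcases lt_or_ge n ρ.length with hn | hn
  · simp [prepend, hn, show n < ρ.length + τ.length by omega]
  · obtain ⟨n, rfl⟩ := Nat.exists_eq_add_of_le hn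
    rw [prepend_apply_add]
    unfold prepend
    by_cases h : n < τ.length
    · simp [h]
    · simp [h, Nat.add_sub_add_left]

end Strings

section CoinTossing

theorem measurable_digits : Measurable digits := by
  refine measurable_pi_iff.2 fun n => ?_
  have hfloor : Measurable fun x : ℝ => ⌊x * 2 ^ (n + 1)⌋ :=
    Int.measurable_floor.comp (measurable_id.mul_const _)
  have hodd : Measurable fun z : ℤ => decide (z % 2 = 1) := measurable_from_top
  exact hodd.comp hfloor

instance : IsProbabilityMeasure mu := by
  refine ⟨?_⟩
  rw [mu, Measure.map_apply measurable_digits MeasurableSet.univ]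
  simp

theorem mu_apply {S : Set Cantor} (hS : MeasurableSet S) :
    mu S = volume {x : ℝ | x ∈ Set.Ico (0 : ℝ) 1 ∧ digits x ∈ S} := by
  rw [mu, Measure.map_apply measurable_digits hS, Measure.restrict_apply (measurable_digits hS)]
  exact congrArg _ (Set.ext fun x => and_comm)

theorem muR_nonneg (S : Set Cantor) : 0 ≤ muR S := ENNReal.toReal_nonneg

theorem muR_le_one (S : Set Cantor) : muR S ≤ 1 := measureReal_le_one

theorem muR_mono {S T : Set Cantor} (h : S ⊆ T) : muR S ≤ muR T := measureReal_mono h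

theorem measurableSet_initSeg (k : ℕ) (p : List Bool → Prop) :
    MeasurableSet {X : Cantor | p (initSeg X k)} := by
  have hmeas : Measurable fun (X : Cantor) (i : Fin k) => X i :=
    measurable_pi_iff.2 fun i => measurable_pi_apply _
  have hset : {X : Cantor | p (initSeg X k)} =
      (fun (X : Cantor) (i : Fin k) => X i) ⁻¹' {f | p (List.ofFn f)} :=
    Set.ext fun X => by
      simp [initSeg, List.ofFn_eq_map, ← List.map_coe_finRange_eq_range, Function.comp_def]
  rw [hset]
  exact hmeas (Set.toFinite _).measurableSet

theorem measurable_prepend (ρ : List Bool) : Measurable (prepend ρ) := by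
  refine measurable_pi_iff.2 fun n => ?_
  unfold prepend
  split_ifs
  · exact measurable_const
  · exact measurable_pi_apply _

theorem digits_eq_decide_floor {x : ℝ} (hx : 0 ≤ x) (n : ℕ) :
    digits x n = decide (⌊x * 2 ^ (n + 1)⌋₊ % 2 = 1) := by
  rw [digits, ← Int.natCast_floor_eq_floor (by positivity)]
  exact decide_eq_decide.2 (by omega)

theorem initSeg_digits {x : ℝ} (hx : 0 ≤ x) (s : ℕ) :
    initSeg (digits x) s = binStr s ⌊x * 2 ^ s⌋₊ := by
  refine List.map_congr_left fun i hi => ?_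
  have hi : i < s := List.mem_range.1 hi
  have hpow : x * 2 ^ s / ((2 ^ (s - 1 - i) : ℕ) : ℝ) = x * 2 ^ (i + 1) := by
    push_cast
    rw [div_eq_iff (by positivity), mul_assoc, ← pow_add]
    congr 2; omega
  rw [digits_eq_decide_floor hx, ← Nat.floor_div_natCast, hpow]

theorem floor_mul_two_pow_lt {x : ℝ} (hx : x ∈ Set.Ico (0 : ℝ) 1) (s : ℕ) :
    ⌊x * 2 ^ s⌋₊ < 2 ^ s := by
  have hx0 := hx.1
  rw [Nat.floor_lt (by positivity), Nat.cast_pow, Nat.cast_two]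
  exact mul_lt_of_lt_one_left (by positivity) hx.2

theorem binVal_initSeg_digits {x : ℝ} (hx : x ∈ Set.Ico (0 : ℝ) 1) (k : ℕ) :
    binVal (initSeg (digits x) k) = ⌊x * 2 ^ k⌋₊ := by
  rw [initSeg_digits hx.1, binVal_binStr (floor_mul_two_pow_lt hx k)]

theorem digits_add_apply (x : ℝ) (n i : ℕ) :
    digits x (n + i) = digits (Int.fract (x * 2 ^ n)) i := by
  have h : Int.fract (x * 2 ^ n) * 2 ^ (i + 1) =
      x * 2 ^ (n + i + 1) - ((2 * (⌊x * 2 ^ n⌋ * 2 ^ i) : ℤ) : ℝ) := by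
    rw [Int.fract]; push_cast; ring
  rw [digits, digits, h, Int.floor_sub_intCast]
  exact decide_eq_decide.2 (by omega)

theorem digits_mem_cylinder_iff {x : ℝ} (ρ : List Bool) :
    x ∈ Set.Ico (0 : ℝ) 1 ∧ Extends (digits x) ρ ↔
      x * 2 ^ ρ.length - binVal ρ ∈ Set.Ico (0 : ℝ) 1 := by
  have hpow : (0 : ℝ) < 2 ^ ρ.length := by positivity
  have hval : (binVal ρ : ℝ) + 1 ≤ 2 ^ ρ.length := by exact_mod_cast binVal_lt ρ
  have hfloor (hx : 0 ≤ x) : ⌊x * 2 ^ ρ.length⌋₊ = binVal ρ ↔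
      x * 2 ^ ρ.length - binVal ρ ∈ Set.Ico (0 : ℝ) 1 := by
    rw [Nat.floor_eq_iff (by positivity), Set.mem_Ico, sub_nonneg, sub_lt_iff_lt_add']
  constructor
  · rintro ⟨hx, h⟩
    rw [← hfloor hx.1, ← binVal_initSeg_digits hx, show initSeg (digits x) ρ.length = ρ from h]
  · intro h
    have hx : 0 ≤ x := nonneg_of_mul_nonneg_left
      ((Nat.cast_nonneg (binVal ρ)).trans (sub_nonneg.1 h.1)) hpow
    refine ⟨⟨hx, ?_⟩, ?_⟩
    · have := h.2
      exact lt_of_mul_lt_mul_right (by linarith) hpow.le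
    · rw [Extends, initSeg_digits hx, (hfloor hx).2 h, binStr_binVal]

theorem digits_eq_prepend {x : ℝ} {ρ : List Bool}
    (h : x * 2 ^ ρ.length - binVal ρ ∈ Set.Ico (0 : ℝ) 1) :
    digits x = prepend ρ (digits (x * 2 ^ ρ.length - binVal ρ)) := by
  have hfract : Int.fract (x * 2 ^ ρ.length) = x * 2 ^ ρ.length - binVal ρ :=
    Int.fract_eq_iff.2 ⟨h.1, h.2, binVal ρ, by push_cast; ring⟩
  obtain ⟨Y, hY⟩ := ((digits_mem_cylinder_iff ρ).2 h).2.exists_eq_prepend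
  rw [hY, ← hfract]
  congr 1
  funext i
  rw [← digits_add_apply, hY, prepend_apply_add]

theorem muR_cylinder_inter (ρ : List Bool) {S : Set Cantor} (hS : MeasurableSet S) :
    muR {X | Extends X ρ ∧ X ∈ S} = (1 / 2) ^ ρ.length * muR {Y | prepend ρ Y ∈ S} := by
  have hcyl : MeasurableSet {X | Extends X ρ ∧ X ∈ S} :=
    (measurableSet_initSeg ρ.length fun τ => τ = ρ).inter hS
  have hprepend : MeasurableSet {Y | prepend ρ Y ∈ S} := measurable_prepend ρ hS
  have hscale : {x : ℝ | x ∈ Set.Ico (0 : ℝ) 1 ∧ digits x ∈ {X | Extends X ρ ∧ X ∈ S}} =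
      (fun x => x * 2 ^ ρ.length) ⁻¹' ((fun y => y + -(binVal ρ : ℝ)) ⁻¹'
        {y : ℝ | y ∈ Set.Ico (0 : ℝ) 1 ∧ digits y ∈ {Y | prepend ρ Y ∈ S}}) := by
    ext x
    simp only [Set.mem_ofPred_eq, Set.mem_preimage, ← and_assoc, digits_mem_cylinder_iff,
      ← sub_eq_add_neg]
    exact and_congr_right fun h => by rw [digits_eq_prepend h]
  rw [muR, muR, mu_apply hcyl, mu_apply hprepend, hscale,
    Real.volume_preimage_mul_right (by positivity), measure_preimage_add_right, ENNReal.toReal_mul,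
    ENNReal.toReal_ofReal (by positivity), abs_of_pos (by positivity), one_div, inv_pow]

theorem muR_eq_cylinder_add_compl (ρ : List Bool) {S : Set Cantor} (hS : MeasurableSet S) :
    muR S = (1 / 2) ^ ρ.length * muR {Y | prepend ρ Y ∈ S} + muR {X | ¬ Extends X ρ ∧ X ∈ S} := by
  rw [← muR_cylinder_inter ρ hS, show {X | Extends X ρ ∧ X ∈ S} = S ∩ {X | Extends X ρ} from
    Set.ext fun X => and_comm, show {X | ¬ Extends X ρ ∧ X ∈ S} = S \ {X | Extends X ρ} from
    Set.ext fun X => and_comm]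
  exact (measureReal_inter_add_sdiff (measurableSet_initSeg ρ.length fun τ => τ = ρ)).symm

theorem muR_cylinder (ρ : List Bool) : muR {X | Extends X ρ} = (1 / 2) ^ ρ.length := by
  have h := muR_cylinder_inter ρ MeasurableSet.univ
  simp only [Set.mem_univ, and_true, Set.ofPred_true] at h
  rw [h, show muR Set.univ = 1 from probReal_univ, mul_one]

theorem muR_initSeg (s : ℕ) (P : List Bool → Bool) : muR {X | P (initSeg X s) = true} =
    ((List.range (2 ^ s)).countP fun j => P (binStr s j)) / 2 ^ s := by
  have hunion : {X | P (initSeg X s) = true} =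
      ⋃ j ∈ (Finset.range (2 ^ s)).filter fun j => P (binStr s j) = true,
        {X | Extends X (binStr s j)} := by
    ext X
    simp only [Set.mem_ofPred_eq, Set.mem_iUnion, Finset.mem_filter, Finset.mem_range, exists_prop,
      Extends, length_binStr]
    constructor
    · intro h
      have hlt := binVal_lt (initSeg X s)
      have heq := binStr_binVal (initSeg X s)
      rw [length_initSeg] at hlt heq
      exact ⟨_, ⟨hlt, heq.symm ▸ h⟩, heq.symm⟩
    · rintro ⟨j, ⟨-, h⟩, hX⟩
      rwa [hX]
  have hdisj : Set.PairwiseDisjoint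
      (↑((Finset.range (2 ^ s)).filter fun j => P (binStr s j) = true))
      fun j => {X | Extends X (binStr s j)} := by
    intro i hi j hj hij
    refine Set.disjoint_left.2 fun X hX hX' => hij ?_
    simp only [Finset.coe_filter, Finset.mem_range, Set.mem_ofPred_eq] at hi hj
    simp only [Set.mem_ofPred_eq, Extends, length_binStr] at hX hX'
    rw [← binVal_binStr hi.1, ← binVal_binStr hj.1, ← hX, ← hX']
  have hmeas (j : ℕ) : MeasurableSet {X | Extends X (binStr s j)} :=
    measurableSet_initSeg _ fun τ => τ = binStr s j
  have hcount : ((Finset.range (2 ^ s)).filter fun j => P (binStr s j) = true).card =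
      (List.range (2 ^ s)).countP fun j => P (binStr s j) := by
    simp only [Finset.card, Finset.filter_val, Finset.range_val, Multiset.range,
      Multiset.filter_coe, Multiset.coe_card, Bool.decide_eq_true, List.countP_eq_length_filter]
  rw [hunion, show muR = mu.real from rfl, measureReal_biUnion_finset hdisj fun j _ => hmeas j]
  simp only [show mu.real = muR from rfl, muR_cylinder, length_binStr, Finset.sum_const, hcount,
    nsmul_eq_mul]
  rw [one_div, inv_pow, div_eq_mul_inv]

end CoinTossing

section PiTwoClass

open Filter Topology

/-- The `Π₂` class of all sequences that meet every requirement `n`, where `X` meets requirement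
`n` if `Q` accepts `n` along some initial segment of `X`. -/
def piTwoClass (Q : List Bool → ℕ → Bool) : Set Cantor :=
  {X | ∀ n, ∃ k, Q (initSeg X k) n = true}

theorem measurableSet_piTwoClass (Q : List Bool → ℕ → Bool) : MeasurableSet (piTwoClass Q) := by
  rw [show piTwoClass Q = ⋂ n, ⋃ k, {X | Q (initSeg X k) n = true} by ext X; simp [piTwoClass]]
  exact .iInter fun n => .iUnion fun k => measurableSet_initSeg k fun τ => Q τ n = true

theorem TOT_eq_piTwoClass (u : CodeO) :
    TOT u = piTwoClass fun τ n => (evalS u.encode τ n).isSome :=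
  Set.ext fun _ => forall_congr' fun _ => dom_eval_iff_exists_evalS

theorem measurableSet_TOT (u : CodeO) : MeasurableSet (TOT u) :=
  TOT_eq_piTwoClass u ▸ measurableSet_piTwoClass _

/-- The requirements up to `n` are all met along prefixes of the string `τ`. -/
def metUpTo (Q : List Bool → ℕ → Bool) (n : ℕ) (τ : List Bool) : Bool :=
  (List.range (n + 1)).all fun i => (List.range (τ.length + 1)).any fun k => Q (τ.take k) i

theorem metUpTo_initSeg {Q : List Bool → ℕ → Bool} {n s : ℕ} {X : Cantor} :
    metUpTo Q n (initSeg X s) = true ↔ ∀ i ≤ n, ∃ k ≤ s, Q (initSeg X k) i = true := by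
  simp only [metUpTo, List.all_eq_true, List.mem_range, Nat.lt_succ_iff]
  exact forall₂_congr fun i _ => any_range_take_initSeg (P := (Q · i))

theorem monotone_metUpTo (Q : List Bool → ℕ → Bool) (n : ℕ) :
    Monotone fun s => {X | metUpTo Q n (initSeg X s) = true} := by
  intro s t hst X hX
  refine metUpTo_initSeg.2 fun i hi => ?_
  obtain ⟨k, hk, h⟩ := metUpTo_initSeg.1 hX i hi
  exact ⟨k, hk.trans hst, h⟩

theorem iUnion_metUpTo (Q : List Bool → ℕ → Bool) (n : ℕ) :
    ⋃ s, {X | metUpTo Q n (initSeg X s) = true} =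
      {X | ∀ i ≤ n, ∃ k, Q (initSeg X k) i = true} := by
  ext X
  simp only [Set.mem_iUnion, Set.mem_ofPred_eq, metUpTo_initSeg]
  constructor
  · rintro ⟨s, h⟩ i hi
    obtain ⟨k, -, hk⟩ := h i hi
    exact ⟨k, hk⟩
  · intro h
    choose! k hk using h
    exact ⟨(Finset.range (n + 1)).sup k, fun i hi =>
      ⟨k i, Finset.le_sup (f := k) (Finset.mem_range.2 (by omega)), hk i hi⟩⟩

theorem tendsto_muR_metUpTo (Q : List Bool → ℕ → Bool) (n : ℕ) :
    Tendsto (fun s => muR {X | metUpTo Q n (initSeg X s) = true}) atTop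
      (𝓝 (muR {X | ∀ i ≤ n, ∃ k, Q (initSeg X k) i = true})) := by
  rw [← iUnion_metUpTo]
  exact (ENNReal.tendsto_toReal (measure_ne_top mu _)).comp
    (tendsto_measure_iUnion_atTop (monotone_metUpTo Q n))

theorem tendsto_muR_forall_le (Q : List Bool → ℕ → Bool) :
    Tendsto (fun n => muR {X | ∀ i ≤ n, ∃ k, Q (initSeg X k) i = true}) atTop
      (𝓝 (muR (piTwoClass Q))) := by
  have hmeas (n : ℕ) : MeasurableSet {X | ∀ i ≤ n, ∃ k, Q (initSeg X k) i = true} := by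
    rw [← iUnion_metUpTo]
    exact .iUnion fun s => measurableSet_initSeg s fun τ => metUpTo Q n τ = true
  have hanti : Antitone fun n => {X | ∀ i ≤ n, ∃ k, Q (initSeg X k) i = true} :=
    fun m n hmn X hX i hi => hX i (hi.trans hmn)
  have hclass : piTwoClass Q = ⋂ n, {X | ∀ i ≤ n, ∃ k, Q (initSeg X k) i = true} := by
    ext X
    simp only [Set.mem_iInter]
    exact ⟨fun h _ i _ => h i, fun h n => h n n le_rfl⟩
  rw [hclass]
  exact (ENNReal.tendsto_toReal (measure_ne_top mu _)).comp
    (tendsto_measure_iInter_atTop (fun n => (hmeas n).nullMeasurableSet) hanti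
      ⟨0, measure_ne_top _ _⟩)

theorem muR_piTwoClass_lt_iff (Q : List Bool → ℕ → Bool) (r : ℝ) :
    muR (piTwoClass Q) < r ↔ ∃ (n : ℕ) (q : ℚ), q < r ∧
      ∀ s, muR {X | metUpTo Q n (initSeg X s) = true} ≤ q := by
  constructor
  · intro h
    obtain ⟨n, hn⟩ := ((tendsto_muR_forall_le Q).eventually_lt_const h).exists
    obtain ⟨q, hq, hqr⟩ := exists_rat_btwn hn
    refine ⟨n, q, hqr, fun s => (muR_mono ?_).trans hq.le⟩
    rw [← iUnion_metUpTo]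
    exact Set.subset_iUnion (fun s => {X | metUpTo Q n (initSeg X s) = true}) s
  · rintro ⟨n, q, hqr, h⟩
    refine lt_of_le_of_lt (muR_mono ?_) ((le_of_tendsto' (tendsto_muR_metUpTo Q n) h).trans_lt hqr)
    exact fun X hX i _ => hX i

variable {α : Type*} [Primcodable α]

theorem sigmaTwo_muR_piTwoClass_lt {Q : α → List Bool → ℕ → Bool}
    (hQ : Computable fun z : α × List Bool × ℕ => Q z.1 z.2.1 z.2.2) :
    SigmaTwo fun z : α × ℚ => muR (piTwoClass (Q z.1)) < z.2 := by
  refine sigmaTwo_of_exists_forall (β := ℕ × ℚ) (R := fun z a s => decide (a.2 < z.2) &&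
    decide ((((List.range (2 ^ s)).countP fun j => metUpTo (Q z.1) a.1 (binStr s j) : ℕ) : ℚ) ≤
      a.2 * 2 ^ s)) (by unfold metUpTo; fun_prop) fun ⟨x, q⟩ => ?_
  rw [muR_piTwoClass_lt_iff, Prod.exists]
  simp only [Bool.and_eq_true, decide_eq_true_eq, forall_and, forall_const]
  refine exists₂_congr fun n p => and_congr (by norm_cast) (forall_congr' fun s => ?_)
  rw [muR_initSeg, div_le_iff₀ (by positivity)]
  norm_cast

theorem rightCeIn_muR_TOT (u : CodeO) : RightCeIn (iterJump 1) (muR (TOT u)) := by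
  have h := sigmaTwo_muR_piTwoClass_lt (Q := fun (_ : Unit) τ n => (evalS u.encode τ n).isSome)
    (by fun_prop)
  rw [rightCeIn_iterJump_one_iff, TOT_eq_piTwoClass]
  exact (h.comp (f := fun q : ℚ => ((), q)) (by fun_prop)).jumpCe

theorem lt_iff_exists_floor_add_one_le {x r : ℝ} (hx : 0 ≤ x) :
    x < r ↔ ∃ k : ℕ, (⌊x * 2 ^ k⌋₊ + 1 : ℝ) ≤ r * 2 ^ k := by
  constructor
  · intro h
    obtain ⟨k, hk⟩ := pow_unbounded_of_one_lt (r - x)⁻¹ (one_lt_two (α := ℝ))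
    have hfloor := Nat.floor_le (show 0 ≤ x * 2 ^ k by positivity)
    rw [inv_lt_iff_one_lt_mul₀ (sub_pos.2 h)] at hk
    exact ⟨k, by linarith⟩
  · rintro ⟨k, hk⟩
    exact lt_of_mul_lt_mul_right ((Nat.lt_floor_add_one _).trans_le hk) (by positivity)

theorem exists_piTwoClass_digits_mem_iff {β : α → ℝ}
    (hβ : SigmaTwo fun z : α × ℚ => β z.1 < z.2) :
    ∃ Q : α → List Bool → ℕ → Bool, (Computable fun z : α × List Bool × ℕ => Q z.1 z.2.1 z.2.2) ∧
      ∀ m, ∀ x ∈ Set.Ico (0 : ℝ) 1, digits x ∈ piTwoClass (Q m) ↔ x ≤ β m := by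
  obtain ⟨R, hR, hRβ⟩ := hβ
  refine ⟨fun m τ n =>
    decide (((binVal τ + 1 : ℕ) : ℚ) ≤ decodeRat n.unpair.2 * 2 ^ τ.length) ||
      (List.range (τ.length + 1)).any fun b => !R (m, decodeRat n.unpair.2) n.unpair.1 b,
    by fun_prop, fun m x hx => ?_⟩
  have hfalse (q : ℚ) (a : ℕ) : (∃ k, (List.range (k + 1)).any fun b => !R (m, q) a b) ↔
      ¬ ∀ b, R (m, q) a b = true := by
    simp only [List.any_eq_true, List.mem_range, Bool.not_eq_true', not_forall, Bool.not_eq_true]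
    exact ⟨fun ⟨_, b, _, hb⟩ => ⟨b, hb⟩, fun ⟨b, hb⟩ => ⟨b, b, by omega, hb⟩⟩
  have hlt (q : ℚ) : (∃ k, ((binVal (initSeg (digits x) k) + 1 : ℕ) : ℚ) ≤ q * 2 ^ k) ↔ x < q := by
    rw [lt_iff_exists_floor_add_one_le hx.1]
    refine exists_congr fun k => ?_
    rw [binVal_initSeg_digits hx]
    norm_cast
  have hmeets (n : ℕ) : (∃ k, (decide (((binVal (initSeg (digits x) k) + 1 : ℕ) : ℚ) ≤
      decodeRat n.unpair.2 * 2 ^ (initSeg (digits x) k).length) ||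
      (List.range ((initSeg (digits x) k).length + 1)).any fun b =>
        !R (m, decodeRat n.unpair.2) n.unpair.1 b) = true) ↔
      x < decodeRat n.unpair.2 ∨ ¬ ∀ b, R (m, decodeRat n.unpair.2) n.unpair.1 b = true := by
    simp only [Bool.or_eq_true, decide_eq_true_eq, length_initSeg, exists_or, hlt, hfalse]
  refine (forall_congr' hmeets).trans ⟨?_, ?_⟩
  · intro h
    refine le_of_forall_lt_rat_imp_le fun q hq => ?_
    obtain ⟨a, ha⟩ := (hRβ (m, q)).1 hq
    have h := h (Nat.pair a (Encodable.encode q))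
    rw [Nat.unpair_pair, decodeRat_encode] at h
    exact (h.resolve_right (not_not.2 ha)).le
  · intro h n
    by_cases hn : x < decodeRat n.unpair.2
    · exact .inl hn
    · exact .inr fun hR => hn (h.trans_lt ((hRβ _).2 ⟨_, hR⟩))

theorem muR_eq_sub {S : Set Cantor} (hS : MeasurableSet S) {a b : ℝ} (ha : 0 ≤ a) (hab : a ≤ b)
    (hb : b ≤ 1) (h : ∀ x ∈ Set.Ico (0 : ℝ) 1, digits x ∈ S ↔ x ∈ Set.Icc a b) :
    muR S = b - a := by
  have hset : {x : ℝ | x ∈ Set.Ico (0 : ℝ) 1 ∧ digits x ∈ S} = Set.Ico 0 1 ∩ Set.Icc a b :=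
    Set.ext fun x => and_congr_right (h x)
  have hae : (Set.Ico 0 1 ∩ Set.Icc a b : Set ℝ) =ᵐ[volume] (Set.Icc 0 1 ∩ Set.Icc a b : Set ℝ) :=
    ae_eq_set_inter Ico_ae_eq_Icc (ae_eq_refl _)
  rw [muR, mu_apply hS, hset, measure_congr hae,
    Set.inter_eq_right.2 (Set.Icc_subset_Icc ha hb), Real.volume_Icc,
    ENNReal.toReal_ofReal (sub_nonneg.2 hab)]

theorem exists_piTwoClass_muR_eq {β : α → ℝ} (hβ : SigmaTwo fun z : α × ℚ => β z.1 < z.2)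
    (hmem : ∀ m, β m ∈ Set.Icc (0 : ℝ) 1) :
    ∃ Q : α → List Bool → ℕ → Bool, (Computable fun z : α × List Bool × ℕ => Q z.1 z.2.1 z.2.2) ∧
      ∀ m, muR (piTwoClass (Q m)) = β m := by
  obtain ⟨Q, hQ, h⟩ := exists_piTwoClass_digits_mem_iff hβ
  refine ⟨Q, hQ, fun m => ?_⟩
  rw [muR_eq_sub (measurableSet_piTwoClass (Q m)) le_rfl (hmem m).1 (hmem m).2 fun x hx => ?_,
    sub_zero]
  rw [h m x hx]
  exact ⟨fun h => ⟨hx.1, h⟩, And.right⟩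

end PiTwoClass

section Dispatch

variable {α σ : Type*} {p : σ → Prop} {d : σ}

/-- The string `1^m 0`. -/
def unary (m : ℕ) : List Bool := List.replicate m true ++ [false]

theorem length_unary (m : ℕ) : (unary m).length = m + 1 := by simp [unary]

/-- The number of leading ones of a string. -/
def leadingOnes (τ : List Bool) : ℕ := τ.findIdx fun b => !b

theorem leadingOnes_replicate (m : ℕ) : leadingOnes (List.replicate m true) = m := by
  rw [leadingOnes, List.findIdx_eq_length.2 (by simp), List.length_replicate]

theorem leadingOnes_unary_append (m : ℕ) (τ : List Bool) : leadingOnes (unary m ++ τ) = m := by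
  have h := leadingOnes_replicate m
  rw [leadingOnes] at h ⊢
  rw [unary, List.append_assoc, List.findIdx_append, h]
  simp [List.findIdx_cons]

@[fun_prop] theorem computable_leadingOnes [Primcodable α] {f : α → List Bool}
    (hf : Computable f) : Computable fun x => leadingOnes (f x) :=
  (Primrec.list_findIdx Primrec.id (Primrec.not.comp Primrec.snd).to₂).to_comp.comp hf

@[fun_prop] theorem computable_unary [Primcodable α] {f : α → ℕ} (hf : Computable f) :
    Computable fun x => unary (f x) := by
  unfold unary; fun_prop

/-- The map that sends `1^m 0 τ` to `h m τ`, with the value `d` on strings of ones. -/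
def dispatch (d : σ) (h : ℕ → List Bool → σ) (τ : List Bool) : σ :=
  bif decide (leadingOnes τ < τ.length) then h (leadingOnes τ) (τ.drop (leadingOnes τ + 1)) else d

theorem dispatch_unary_append (h : ℕ → List Bool → σ) (m : ℕ) (τ : List Bool) :
    dispatch d h (unary m ++ τ) = h m τ := by
  have hlen : m < (unary m ++ τ).length := by rw [List.length_append, length_unary]; omega
  rw [dispatch, leadingOnes_unary_append, decide_eq_true hlen, cond_true, ← length_unary m,
    List.drop_left]

theorem initSeg_prepend_unary {k m : ℕ} (hk : k ≤ m) (Y : Cantor) :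
    initSeg (prepend (unary m) Y) k = List.replicate k true := by
  have hlen := length_unary m
  rw [← take_initSeg _ (show k ≤ (unary m).length by omega), initSeg_prepend_length, unary,
    List.take_append_of_le_length (by simpa using hk), List.take_replicate, min_eq_left hk]

theorem exists_dispatch_initSeg_prepend (hd : ¬ p d) {h : ℕ → List Bool → σ} {m : ℕ} {Y : Cantor} :
    (∃ k, p (dispatch d h (initSeg (prepend (unary m) Y) k))) ↔ ∃ k, p (h m (initSeg Y k)) := by
  have hstage (k : ℕ) : dispatch d h (initSeg (prepend (unary m) Y) ((unary m).length + k)) =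
      h m (initSeg Y k) := by rw [initSeg_prepend, dispatch_unary_append]
  constructor
  · rintro ⟨k, hk⟩
    rcases le_or_gt k m with hkm | hkm
    · rw [initSeg_prepend_unary hkm, dispatch, leadingOnes_replicate] at hk
      exact absurd (by simpa using hk) hd
    · obtain ⟨k, rfl⟩ := Nat.exists_eq_add_of_lt hkm
      refine ⟨k, ?_⟩
      rwa [← hstage, length_unary, add_right_comm]
  · rintro ⟨k, hk⟩
    exact ⟨_, (hstage k).symm ▸ hk⟩

/-- The map on strings that follows `g` above `ρ` and `h` on strings incomparable with `ρ`. It lags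
behind by `ρ.length` stages and has the value `d` on the strings shorter than `ρ`. -/
def onCone (d : σ) (ρ : List Bool) (g h : List Bool → σ) (τ : List Bool) : σ :=
  bif decide (ρ.length ≤ τ.length) then
    bif decide (τ.take ρ.length = ρ) then g (τ.drop ρ.length)
    else h (τ.take (τ.length - ρ.length))
  else d

theorem exists_onCone_iff (hd : ¬ p d) {ρ : List Bool} {g h : List Bool → σ} {X : Cantor} :
    (∃ k, p (onCone d ρ g h (initSeg X k))) ↔
      ∃ k, p (onCone d ρ g h (initSeg X (ρ.length + k))) := by
  refine ⟨fun ⟨k, hk⟩ => ?_, fun ⟨k, hk⟩ => ⟨_, hk⟩⟩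
  rcases le_or_gt ρ.length k with hle | hlt
  · obtain ⟨k, rfl⟩ := Nat.exists_eq_add_of_le hle
    exact ⟨k, hk⟩
  · rw [onCone, length_initSeg, decide_eq_false hlt.not_ge] at hk
    exact absurd hk hd

theorem exists_onCone_initSeg_prepend (hd : ¬ p d) {ρ : List Bool} {g h : List Bool → σ}
    {Y : Cantor} :
    (∃ k, p (onCone d ρ g h (initSeg (prepend ρ Y) k))) ↔ ∃ k, p (g (initSeg Y k)) := by
  rw [exists_onCone_iff hd]
  refine exists_congr fun k => ?_
  simp [onCone, initSeg_prepend]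

theorem exists_onCone_initSeg_of_not_extends (hd : ¬ p d) {ρ : List Bool} {g h : List Bool → σ}
    {X : Cantor} (hX : ¬ Extends X ρ) :
    (∃ k, p (onCone d ρ g h (initSeg X k))) ↔ ∃ k, p (h (initSeg X k)) := by
  rw [exists_onCone_iff hd]
  refine exists_congr fun k => ?_
  have hX : initSeg X ρ.length ≠ ρ := hX
  rw [onCone, length_initSeg, take_initSeg X (Nat.le_add_right _ _), decide_eq_false hX,
    take_initSeg X (by omega), decide_eq_true (Nat.le_add_right _ _), Nat.add_sub_cancel_left]
  rfl

end Dispatch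

section Machines

theorem eq_of_dom_iff_of_forall_mem {a b : Part ℕ} (hdom : a.Dom ↔ b.Dom)
    (hsub : ∀ v ∈ a, v ∈ b) : a = b :=
  Part.ext' hdom fun ha hb => Part.mem_unique (hsub _ (Part.get_mem ha)) (Part.get_mem hb)

theorem exists_codeO_TOT_prepend_unary {Q : ℕ → List Bool → ℕ → Bool}
    (hQ : Computable fun z : ℕ × List Bool × ℕ => Q z.1 z.2.1 z.2.2) :
    ∃ c : CodeO, ∀ m, {Y | prepend (unary m) Y ∈ TOT c} = piTwoClass (Q m) := by
  let f (n m : ℕ) (τ : List Bool) : Option ℕ := bif Q m τ n then some 0 else none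
  have hf : Computable fun z : List Bool × ℕ => dispatch none (f z.2) z.1 := by
    unfold dispatch f; fun_prop
  obtain ⟨c, hc⟩ := exists_codeO_of_initSeg (g := fun τ n => dispatch none (f n) τ) hf
  refine ⟨c, fun m => Set.ext fun Y => forall_congr' fun n => ?_⟩
  refine ((hc _ n).1.trans (exists_dispatch_initSeg_prepend (p := (Option.isSome · = true))
    (by simp))).trans (exists_congr fun k => ?_)
  cases hk : Q m (initSeg Y k) n <;> simp [f, hk]

theorem exists_codeO_prepend_unary :
    ∃ d : CodeO, ∀ c X n, evalO (prepend (unary c.encode) X) d n = evalO X c n := by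
  have hg : Computable fun z : List Bool × ℕ => dispatch none (fun m τ => evalS m τ z.2) z.1 := by
    unfold dispatch; fun_prop
  obtain ⟨d, hd⟩ :=
    exists_codeO_of_initSeg (g := fun τ n => dispatch none (fun m τ => evalS m τ n) τ) hg
  refine ⟨d, fun c X n => eq_of_dom_iff_of_forall_mem ?_ fun v hv => ?_⟩
  · exact ((hd _ n).1.trans (exists_dispatch_initSeg_prepend (p := (Option.isSome · = true))
      (by simp))).trans dom_eval_iff_exists_evalS.symm
  · exact mem_eval_iff_exists_evalS.2
      ((exists_dispatch_initSeg_prepend (p := (· = some v)) (by simp)).1 ((hd _ n).2 v hv))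

theorem exists_codeO_onCone (ρ : List Bool) (d : CodeO) {Q : List Bool → ℕ → Bool}
    (hQ : Computable fun z : List Bool × ℕ => Q z.1 z.2) :
    ∃ u : CodeO, (∀ X n, evalO (prepend ρ X) u n = evalO X d n) ∧
      ∀ X, ¬ Extends X ρ → (X ∈ TOT u ↔ X ∈ piTwoClass Q) := by
  let h (n : ℕ) (τ : List Bool) : Option ℕ := bif Q τ n then some 0 else none
  have hg : Computable fun z : List Bool × ℕ =>
      onCone none ρ (fun τ => evalS d.encode τ z.2) (h z.2) z.1 := by
    unfold onCone h; fun_prop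
  obtain ⟨u, hu⟩ := exists_codeO_of_initSeg
    (g := fun τ n => onCone none ρ (fun τ => evalS d.encode τ n) (h n) τ) hg
  refine ⟨u, fun X n => eq_of_dom_iff_of_forall_mem ?_ fun v hv => ?_,
    fun X hX => forall_congr' fun n => ?_⟩
  · exact ((hu _ n).1.trans (exists_onCone_initSeg_prepend (p := (Option.isSome · = true))
      (by simp))).trans dom_eval_iff_exists_evalS.symm
  · exact mem_eval_iff_exists_evalS.2
      ((exists_onCone_initSeg_prepend (p := (· = some v)) (by simp)).1 ((hu _ n).2 v hv))
  · refine ((hu _ n).1.trans (exists_onCone_initSeg_of_not_extends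
      (p := (Option.isSome · = true)) (by simp) hX)).trans (exists_congr fun k => ?_)
    cases hk : Q (initSeg X k) n <;> simp [h, hk]

variable {α : Type*} [Primcodable α]

theorem exists_piTwoClass_TOT_off_cone (u : CodeO) {ρ : α → List Bool} (hρ : Computable ρ) :
    ∃ Q : α → List Bool → ℕ → Bool, (Computable fun z : α × List Bool × ℕ => Q z.1 z.2.1 z.2.2) ∧
      ∀ x, piTwoClass (Q x) = {X | ¬ Extends X (ρ x) ∧ X ∈ TOT u} := by
  refine ⟨fun x τ n => onCone false (ρ x) (fun _ => false)
    (fun τ => (evalS u.encode τ n).isSome) τ, by unfold onCone; fun_prop, fun x => ?_⟩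
  ext X
  by_cases hX : Extends X (ρ x)
  · obtain ⟨Y, rfl⟩ := hX.exists_eq_prepend
    refine iff_of_false (fun h => ?_) fun h => h.1 hX
    obtain ⟨_, hk⟩ := (exists_onCone_initSeg_prepend (p := (· = true)) (by simp)).1 (h 0)
    exact Bool.false_ne_true hk
  · rw [TOT_eq_piTwoClass]
    refine Iff.trans (forall_congr' fun n => ?_) (and_iff_right hX).symm
    exact exists_onCone_initSeg_of_not_extends (p := (· = true)) (by simp) hX

end Machines

section Dodging

open Filter Topology

variable {V : Set ℝ} {w β γ : ℝ} {a b p q : ℕ → ℝ}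

/-- The strategy that keeps `w * b + a` out of the open intervals `(p s, q s)`: `b` starts at `1`,
and whenever `w * b s + a s` lies in `(p s, q s)`, `b` is lowered just enough to move this number to
`p s`. -/
structure Dodges (w : ℝ) (a p q b : ℕ → ℝ) : Prop where
  zero : b 0 = 1
  succ_of_mem (s : ℕ) (h : w * b s + a s ∈ Set.Ioo (p s) (q s)) : w * b (s + 1) + a s = p s
  succ_of_notMem (s : ℕ) (h : w * b s + a s ∉ Set.Ioo (p s) (q s)) : b (s + 1) = b s

theorem Dodges.antitone (h : Dodges w a p q b) (hw : 0 < w) : Antitone b := by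
  refine antitone_nat_of_succ_le fun s => ?_
  by_cases hs : w * b s + a s ∈ Set.Ioo (p s) (q s)
  · have := h.succ_of_mem s hs
    exact le_of_mul_le_mul_left (by linarith [hs.1]) hw
  · exact (h.succ_of_notMem s hs).le

theorem measureReal_inter_Ioi_add_le (hV : volume V ≠ ⊤) {x y z : ℝ} (hxy : x ≤ y)
    (hyz : y < z) (hsub : Set.Ioo x z ⊆ V) :
    volume.real (V ∩ Set.Ioi y) + (y - x) ≤ volume.real (V ∩ Set.Ioi x) := by
  have hfin {T : Set ℝ} : volume (V ∩ T) ≠ ⊤ :=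
    measure_ne_top_of_subset Set.inter_subset_left hV
  have hdisj : Disjoint (V ∩ Set.Ioi y) (Set.Ioc x y) :=
    Set.disjoint_left.2 fun t ht ht' => ht'.2.not_gt ht.2
  rw [← Real.volume_real_Ioc_of_le hxy, ← measureReal_union hdisj measurableSet_Ioc hfin (by simp)]
  refine measureReal_mono (Set.union_subset ?_ fun t ht => ?_) hfin
  · exact Set.inter_subset_inter_right V (Set.Ioi_subset_Ioi hxy)
  · exact ⟨hsub ⟨ht.1, ht.2.trans_lt hyz⟩, ht.1⟩

/-- Every lowering of `b` is paid for by the part of `V` that `w * b + a` jumps over; since `a` is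
decreasing, no part of `V` is used twice. -/
theorem Dodges.mul_one_sub_le (h : Dodges w a p q b) (hV : volume V ≠ ⊤) (ha : Antitone a)
    (hpq : ∀ s, Set.Ioo (p s) (q s) ⊆ V) (s : ℕ) :
    w * (1 - b s) ≤ volume.real (V ∩ Set.Ioi (w * b s + a s)) := by
  have hmono {x y : ℝ} (hxy : x ≤ y) :
      volume.real (V ∩ Set.Ioi y) ≤ volume.real (V ∩ Set.Ioi x) :=
    measureReal_mono (Set.inter_subset_inter_right V (Set.Ioi_subset_Ioi hxy))
      (measure_ne_top_of_subset Set.inter_subset_left hV)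
  induction s with
  | zero => simp [h.zero]
  | succ s ih =>
    have has : a (s + 1) ≤ a s := ha s.le_succ
    by_cases hs : w * b s + a s ∈ Set.Ioo (p s) (q s)
    · have hp := h.succ_of_mem s hs
      calc w * (1 - b (s + 1)) = w * (1 - b s) + (w * b s + a s - p s) := by linarith
        _ ≤ volume.real (V ∩ Set.Ioi (p s)) := by
          linarith [measureReal_inter_Ioi_add_le hV hs.1.le hs.2 (hpq s)]
        _ ≤ _ := hmono (by linarith)
    · rw [h.succ_of_notMem s hs]
      exact ih.trans (hmono (by linarith))

theorem Dodges.nonneg (h : Dodges w a p q b) (hw : 0 < w) (hV : volume V ≤ ENNReal.ofReal w)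
    (ha : Antitone a) (hpq : ∀ s, Set.Ioo (p s) (q s) ⊆ V) (s : ℕ) : 0 ≤ b s := by
  have hfin : volume V ≠ ⊤ := ne_top_of_le_ne_top ENNReal.ofReal_ne_top hV
  have hle : w * (1 - b s) ≤ w * 1 := by
    rw [mul_one]
    exact (h.mul_one_sub_le hfin ha hpq s).trans <|
      (measureReal_mono Set.inter_subset_left hfin).trans (ENNReal.toReal_le_of_le_ofReal hw.le hV)
  linarith [le_of_mul_le_mul_left hle hw]

theorem Dodges.notMem_Ioo (h : Dodges w a p q b) (hw : 0 < w) (ha : Antitone a)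
    (haγ : Tendsto a atTop (𝓝 γ)) (hbβ : Tendsto b atTop (𝓝 β)) {x y : ℝ}
    (hxy : ∃ᶠ s in atTop, p s = x ∧ q s = y) : w * β + γ ∉ Set.Ioo x y := by
  intro hmem
  have hlim : Tendsto (fun s => w * b s + a s) atTop (𝓝 (w * β + γ)) := (hbβ.const_mul w).add haγ
  obtain ⟨s, ⟨rfl, rfl⟩, hs⟩ := (hxy.and_eventually (hlim.eventually_lt_const hmem.2)).exists
  have hle (t : ℕ) : w * β + γ ≤ w * b t + a s := by
    gcongr
    · exact (h.antitone hw).le_of_tendsto hbβ t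
    · exact ha.le_of_tendsto haγ s
  have hjump := h.succ_of_mem s ⟨hmem.1.trans_le (hle s), hs⟩
  exact (hmem.1.trans_le (hle (s + 1))).ne' hjump

end Dodging

section Randomness

open Filter Topology

variable {α : Type*} [Primcodable α]

theorem Ioo_subset_testSet {W : Set ℕ} {i : ℕ} {p q : ℚ}
    (h : Nat.pair i (Encodable.encode (p, q)) ∈ W) : Set.Ioo (p : ℝ) q ⊆ testSet W i :=
  fun _ hx => ⟨p, q, h, hx⟩

theorem exists_interval_scan {I : α → Set (ℚ × ℚ)} (hI : JumpCe fun z : α × ℚ × ℚ => z.2 ∈ I z.1) :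
    ∃ P : α → List Bool → ℚ × ℚ, (Computable fun z : α × List Bool => P z.1 z.2) ∧
      (∀ x k, P x (initSeg haltingSeq k) ∈ I x ∨ P x (initSeg haltingSeq k) = (0, 0)) ∧
      ∀ x, ∀ J ∈ I x, ∃ᶠ k in atTop, P x (initSeg haltingSeq k) = J := by
  obtain ⟨R, hR, hRI, hmono⟩ := hI.exists_monotone
  let J (τ : List Bool) : ℚ × ℚ := ((Encodable.decode τ.length.unpair.1).getD (0, 0))
  refine ⟨fun x τ => bif R τ (x, J τ) then J τ else (0, 0), by unfold J; fun_prop,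
    fun x k => ?_, fun x T hT => ?_⟩
  · cases h : R (initSeg haltingSeq k) (x, J (initSeg haltingSeq k))
    · exact .inr (by simp only [h, cond_false])
    · exact .inl (by simpa only [h, cond_true] using (hRI _).2 ⟨k, h⟩)
  · obtain ⟨k, hk⟩ := (hRI (x, T)).1 hT
    refine frequently_atTop.2 fun l => ⟨Nat.pair (Encodable.encode T) (max k l), ?_, ?_⟩
    · exact (le_max_right k l).trans (Nat.right_le_pair _ _)
    · have hJ : J (initSeg haltingSeq (Nat.pair (Encodable.encode T) (max k l))) = T := by
        simp only [J, length_initSeg, Nat.unpair_pair, Encodable.encodek, Option.getD_some]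
      simp only [hJ, hmono _ k _ ((le_max_left k l).trans (Nat.right_le_pair _ _)) hk, cond_true]

theorem exists_computable_dodges {ℓ : α → ℕ} (hℓ : Computable ℓ) {A : α → List Bool → ℚ}
    (hA : Computable fun z : α × List Bool => A z.1 z.2) {P : α → List Bool → ℚ × ℚ}
    (hP : Computable fun z : α × List Bool => P z.1 z.2) :
    ∃ B : α → List Bool → ℚ, (Computable fun z : α × List Bool => B z.1 z.2) ∧
      ∀ x, Dodges ((1 / 2) ^ ℓ x) (fun s => A x (initSeg haltingSeq s))
        (fun s => (P x (initSeg haltingSeq s)).1) (fun s => (P x (initSeg haltingSeq s)).2)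
        (fun s => B x (initSeg haltingSeq s)) := by
  let sum (x : α) (τ : List Bool) (b : ℚ) : ℚ := (1 / 2 : ℚ) ^ ℓ x * b + A x τ
  let step (x : α) (τ : List Bool) (b : ℚ) : ℚ :=
    bif decide ((P x τ).1 < sum x τ b) && decide (sum x τ b < (P x τ).2) then
      2 ^ ℓ x * ((P x τ).1 - A x τ) else b
  have hstep : Computable fun z : α × List Bool × ℚ => step z.1 z.2.1 z.2.2 := by
    unfold step sum; fun_prop
  have hmem (x : α) (τ : List Bool) (b : ℚ) :
      ((1 / 2 : ℝ) ^ ℓ x * b + A x τ ∈ Set.Ioo ((P x τ).1 : ℝ) (P x τ).2) ↔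
        (P x τ).1 < sum x τ b ∧ sum x τ b < (P x τ).2 := by
    have hsum : (1 / 2 : ℝ) ^ ℓ x * b + A x τ = (sum x τ b : ℝ) := by simp [sum]
    rw [hsum, Set.mem_Ioo, Rat.cast_lt, Rat.cast_lt]
  refine ⟨runAlong (fun _ => 1) step, computable_runAlong (Computable.const 1) hstep,
    fun x => ⟨Rat.cast_one, fun s h => ?_, fun s h => ?_⟩⟩
  · rw [hmem] at h
    simp only [runAlong_initSeg_succ, step, h, decide_true, Bool.and_self, cond_true]
    push_cast
    rw [← mul_assoc, ← mul_pow]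
    norm_num
  · have h := decide_eq_false ((hmem x _ _).not.1 h)
    rw [Bool.decide_and] at h
    simp only [runAlong_initSeg_succ, step, h, cond_false]

theorem exists_jumpCe_notMem_testSet {W : Set ℕ} (hW : CeIn (iterJump 1) W)
    (hvol : ∀ i, volume (testSet W i) ≤ ENNReal.ofReal ((2 : ℝ)⁻¹ ^ i)) {γ : α → ℝ}
    (hγ : JumpCe fun z : α × ℚ => γ z.1 < z.2) {K : ℚ} (hK : ∀ x, γ x < K) {ℓ : α → ℕ}
    (hℓ : Computable ℓ) :
    ∃ β : α → ℝ, (JumpCe fun z : α × ℚ => β z.1 < z.2) ∧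
      ∀ x, β x ∈ Set.Icc 0 1 ∧ (1 / 2) ^ ℓ x * β x + γ x ∉ testSet W (ℓ x) := by
  obtain ⟨A, hA, hAγ⟩ := exists_computable_decreasesTo hγ K hK
  have hWJ : JumpCe (· ∈ W) := ceIn_iterJump_one_iff.1 hW
  obtain ⟨P, hP, hPW, hPfreq⟩ := exists_interval_scan
    (I := fun x => {J | Nat.pair (ℓ x) (Encodable.encode J) ∈ W})
    (hWJ.comp (f := fun z : α × ℚ × ℚ => Nat.pair (ℓ z.1) (Encodable.encode z.2)) (by fun_prop))
  obtain ⟨B, hB, hdodge⟩ := exists_computable_dodges hℓ hA hP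
  have hw (x : α) : (0 : ℝ) < (1 / 2) ^ ℓ x := by positivity
  have ha (x : α) : Antitone fun s => (A x (initSeg haltingSeq s) : ℝ) :=
    Rat.cast_mono.comp_antitone (hAγ x).2.antitone
  have hPV (x : α) (s : ℕ) : Set.Ioo ((P x (initSeg haltingSeq s)).1 : ℝ)
      (P x (initSeg haltingSeq s)).2 ⊆ testSet W (ℓ x) := by
    obtain h | h := hPW x s
    · exact Ioo_subset_testSet h
    · simp [h]
  have hnonneg (x : α) : ∀ s, 0 ≤ (B x (initSeg haltingSeq s) : ℝ) :=
    (hdodge x).nonneg (hw x) (by simpa using hvol (ℓ x)) (ha x) (hPV x)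
  have hbdd (x : α) : BddBelow (Set.range fun s => (B x (initSeg haltingSeq s) : ℝ)) :=
    ⟨0, Set.forall_mem_range.2 (hnonneg x)⟩
  refine ⟨fun x => ⨅ s, (B x (initSeg haltingSeq s) : ℝ), (jumpCe_exists_lt hB).congr fun z => ?_,
    fun x => ⟨⟨le_ciInf (hnonneg x), (ciInf_le (hbdd x) 0).trans (hdodge x).zero.le⟩, ?_⟩⟩
  · simp only [ciInf_lt_iff (hbdd z.1), Rat.cast_lt]
  · rintro ⟨p, q, hpqW, hpq⟩
    refine (hdodge x).notMem_Ioo (hw x) (ha x) (hAγ x).2.tendsto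
      (tendsto_atTop_ciInf ((hdodge x).antitone (hw x)) (hbdd x)) ?_ hpq
    exact (hPfreq x _ hpqW).mono fun s hs => by simp [hs]

end Randomness

section TotalityIsRandom

theorem mlRandomIn_muR_TOT {u : CodeO} (hu : UniversalOM u) :
    MLRandomIn (iterJump 1) (muR (TOT u)) := by
  intro W hW hvol
  obtain ⟨σ, -, -, hσ⟩ := hu
  let cone (m : ℕ) : List Bool := (Encodable.decode m : Option (List Bool)).getD [] ++ unary m
  have hcone : Computable cone := by unfold cone; fun_prop
  obtain ⟨R, hR, hoff⟩ := exists_piTwoClass_TOT_off_cone u hcone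
  obtain ⟨β, hβ, hβW⟩ := exists_jumpCe_notMem_testSet hW hvol
    (γ := fun m => muR (piTwoClass (R m))) (sigmaTwo_muR_piTwoClass_lt hR).jumpCe (K := 2)
    (fun m => (muR_le_one _).trans_lt (by norm_num)) (ℓ := fun m => (cone m).length) (by fun_prop)
  obtain ⟨Q, hQ, hQβ⟩ := exists_piTwoClass_muR_eq hβ.sigmaTwo fun m => (hβW m).1
  obtain ⟨M, hM⟩ := exists_codeO_TOT_prepend_unary hQ
  let m := Encodable.encode (σ M)
  have hm : cone m = σ M ++ unary m := by simp only [cone, m, Encodable.encodek, Option.getD_some]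
  have hin : {Y | prepend (cone m) Y ∈ TOT u} = piTwoClass (Q m) := by
    rw [← hM m, hm]
    ext Y
    simp only [prepend_append, TOT, Set.mem_ofPred_eq, hσ]
  refine ⟨(cone m).length, ?_⟩
  rw [muR_eq_cylinder_add_compl (cone m) (measurableSet_TOT u), hin, hQβ, ← hoff]
  exact (hβW m).2

end TotalityIsRandom

section KuceraSlaman

open Filter Topology

variable {α β δ : ℝ} {a b y c : ℕ → ℝ}

/-- The Kučera–Slaman construction on approximations `a ↓ α` and `b ↓ β`: `y` approximates
`α - δ * β`, and `c s` is the value of `b` that has been taken into account before stage `s`. The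
construction acts when `a` has come down far enough. -/
structure KuceraSlaman (δ : ℝ) (a b y c : ℕ → ℝ) : Prop where
  c_zero : c 0 = b 0
  y_zero : y 0 = a 0 - δ * b 0
  c_succ_of_le (s : ℕ) (h : a s - δ * c s ≤ y s) : c (s + 1) = b s
  y_succ_of_le (s : ℕ) (h : a s - δ * c s ≤ y s) : y (s + 1) = a s - δ * c s
  c_succ_of_lt (s : ℕ) (h : y s < a s - δ * c s) : c (s + 1) = c s
  y_succ_of_lt (s : ℕ) (h : y s < a s - δ * c s) : y (s + 1) = y s

namespace KuceraSlaman

theorem le_c (h : KuceraSlaman δ a b y c) (hb : Antitone b) (s : ℕ) : b s ≤ c s := by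
  induction s with
  | zero => exact h.c_zero.ge
  | succ s ih =>
    have hbs := hb s.le_succ
    rcases le_or_gt (a s - δ * c s) (y s) with hs | hs
    · rwa [h.c_succ_of_le s hs]
    · rw [h.c_succ_of_lt s hs]
      exact hbs.trans ih

theorem antitone_c (h : KuceraSlaman δ a b y c) (hb : Antitone b) : Antitone c := by
  refine antitone_nat_of_succ_le fun s => ?_
  rcases le_or_gt (a s - δ * c s) (y s) with hs | hs
  · exact (h.c_succ_of_le s hs).trans_le (h.le_c hb s)
  · exact (h.c_succ_of_lt s hs).le

theorem antitone_y (h : KuceraSlaman δ a b y c) : Antitone y := by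
  refine antitone_nat_of_succ_le fun s => ?_
  rcases le_or_gt (a s - δ * c s) (y s) with hs | hs
  · exact (h.y_succ_of_le s hs).trans_le hs
  · exact (h.y_succ_of_lt s hs).le

theorem volume_iUnion_Ioo_le (h : KuceraSlaman δ a b y c) (hδ : 0 ≤ δ) (hb : Antitone b)
    (hβ : ∀ s, β ≤ b s) :
    volume (⋃ s, Set.Ioo (a s - 2 * (δ * (c s - c (s + 1)))) (a s)) ≤
      ENNReal.ofReal (2 * δ * (b 0 - β)) := by
  refine (measure_iUnion_le _).trans ?_
  rw [ENNReal.tsum_eq_iSup_nat]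
  refine iSup_le fun N => ?_
  simp only [Real.volume_Ioo, sub_sub_cancel]
  rw [← ENNReal.ofReal_sum_of_nonneg fun s _ => by
      have := sub_nonneg.2 (h.antitone_c hb s.le_succ)
      positivity, ← Finset.mul_sum, ← Finset.mul_sum, Finset.sum_range_sub', h.c_zero, mul_assoc]
  gcongr
  exact (hβ N).trans (h.le_c hb N)

theorem lt_add (h : KuceraSlaman δ a b y c) (ha : ∀ s, α < a s)
    (hα : ∀ s, α ∉ Set.Ioo (a s - 2 * (δ * (c s - c (s + 1)))) (a s)) (s : ℕ) :
    α < y s + δ * c s := by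
  induction s with
  | zero =>
    rw [h.y_zero, h.c_zero, sub_add_cancel]
    exact ha 0
  | succ s ih =>
    rcases le_or_gt (a s - δ * c s) (y s) with hs | hs
    · have hle : α ≤ a s - 2 * (δ * (c s - c (s + 1))) :=
        not_lt.1 fun hlt => hα s ⟨hlt, ha s⟩
      rw [h.y_succ_of_le s hs]
      linarith [ha s]
    · rwa [h.y_succ_of_lt s hs, h.c_succ_of_lt s hs]

theorem frequently_le (h : KuceraSlaman δ a b y c) (haα : Tendsto a atTop (𝓝 α))
    (hyc : ∀ s, α < y s + δ * c s) : ∃ᶠ s in atTop, a s - δ * c s ≤ y s := by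
  intro hev
  obtain ⟨N, hN⟩ := eventually_atTop.1 hev
  have hconst (s : ℕ) (hs : N ≤ s) : y s = y N ∧ c s = c N := by
    induction s, hs using Nat.le_induction with
    | base => exact ⟨rfl, rfl⟩
    | succ s hs ih =>
      have hlt := not_le.1 (hN s hs)
      exact ⟨(h.y_succ_of_lt s hlt).trans ih.1, (h.c_succ_of_lt s hlt).trans ih.2⟩
  obtain ⟨s, has, hs⟩ :=
    ((haα.eventually_lt_const (hyc N)).and (eventually_ge_atTop N)).exists
  have hlt := not_le.1 (hN s hs)
  rw [(hconst s hs).1, (hconst s hs).2] at hlt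
  linarith

theorem tendsto_c (h : KuceraSlaman δ a b y c) (hb : Antitone b) (hbβ : Tendsto b atTop (𝓝 β))
    (hact : ∃ᶠ s in atTop, a s - δ * c s ≤ y s) : Tendsto c atTop (𝓝 β) := by
  refine tendsto_order.2 ⟨fun r hr => ?_, fun r hr => ?_⟩
  · exact .of_forall fun s => hr.trans_le ((hb.le_of_tendsto hbβ s).trans (h.le_c hb s))
  · obtain ⟨s, hs, hbs⟩ := (hact.and_eventually (hbβ.eventually_lt_const hr)).exists
    filter_upwards [eventually_ge_atTop (s + 1)] with t ht
    exact ((h.antitone_c hb ht).trans_eq (h.c_succ_of_le s hs)).trans_lt hbs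

theorem exists_lt_iff (h : KuceraSlaman δ a b y c) (hb : Antitone b) (ha : ∀ s, α < a s)
    (haα : Tendsto a atTop (𝓝 α)) (hbβ : Tendsto b atTop (𝓝 β))
    (hα : ∀ s, α ∉ Set.Ioo (a s - 2 * (δ * (c s - c (s + 1)))) (a s)) {q : ℝ} :
    (∃ s, y s < q) ↔ α - δ * β < q := by
  have hyc := h.lt_add ha hα
  have hact := h.frequently_le haα hyc
  have hcβ := (h.tendsto_c hb hbβ hact).const_mul δ
  constructor
  · rintro ⟨s, hs⟩
    refine lt_of_le_of_lt ?_ hs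
    refine le_of_tendsto (b := y s) (hcβ.const_sub α) ?_
    filter_upwards [eventually_ge_atTop s] with t ht
    linarith [hyc t, h.antitone_y ht]
  · intro hq
    obtain ⟨s, hs, hlt⟩ :=
      (hact.and_eventually ((haα.sub hcβ).eventually_lt_const hq)).exists
    exact ⟨s + 1, (h.y_succ_of_le s hs).trans_lt hlt⟩

end KuceraSlaman

theorem JumpCe.exists_computable_decreasesTo {r : ℝ} (h : JumpCe fun q : ℚ => r < q) :
    ∃ A : List Bool → ℚ, Computable A ∧ DecreasesTo (fun k => A (initSeg haltingSeq k)) r := by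
  obtain ⟨K, hK⟩ := exists_rat_gt r
  obtain ⟨A, hA, h⟩ := RandProb.exists_computable_decreasesTo (γ := fun _ : Unit => r)
    (h.comp (f := fun z : Unit × ℚ => z.2) (by fun_prop)) K fun _ => hK
  exact ⟨A (), by fun_prop, (h ()).2⟩

theorem exists_ceIn_testSet_eq {P : ℕ → List Bool → ℚ × ℚ}
    (hP : Computable fun z : ℕ × List Bool => P z.1 z.2) :
    ∃ W, CeIn (iterJump 1) W ∧ ∀ i, testSet W i =
      ⋃ s, Set.Ioo ((P i (initSeg haltingSeq s)).1 : ℝ) (P i (initSeg haltingSeq s)).2 := by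
  refine ⟨{m | ∃ s, (Encodable.decode m.unpair.2 : Option (ℚ × ℚ)) =
    some (P m.unpair.1 (initSeg haltingSeq s))}, ceIn_iterJump_one_iff.2
      ⟨fun τ m => decide ((Encodable.decode m.unpair.2 : Option (ℚ × ℚ)) = some (P m.unpair.1 τ)),
        by fun_prop, fun m => by simp only [decide_eq_true_eq]⟩, fun i => Set.ext fun x => ?_⟩
  simp only [testSet, Set.mem_ofPred_eq, Nat.unpair_pair, Encodable.encodek, Option.some_inj,
    Set.mem_iUnion, Set.mem_Ioo]
  constructor
  · rintro ⟨p, q, ⟨s, hs⟩, hx⟩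
    exact ⟨s, by rwa [← hs]⟩
  · rintro ⟨s, hx⟩
    exact ⟨_, _, ⟨s, rfl⟩, hx⟩

theorem exists_computable_kuceraSlaman {A B : List Bool → ℚ} (hA : Computable A)
    (hB : Computable B) (k : ℕ) :
    ∃ Y L : ℕ → List Bool → ℚ, (Computable fun z : ℕ × List Bool => Y z.1 z.2) ∧
      (Computable fun z : ℕ × List Bool => L z.1 z.2) ∧
      ∀ i, ∃ c, KuceraSlaman ((1 / 2) ^ (i + k)) (fun s => A (initSeg haltingSeq s))
        (fun s => B (initSeg haltingSeq s)) (fun s => Y i (initSeg haltingSeq s)) c ∧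
        ∀ s, (L i (initSeg haltingSeq s) : ℝ) =
          A (initSeg haltingSeq s) - 2 * ((1 / 2) ^ (i + k) * (c s - c (s + 1))) := by
  let y (i : ℕ) (τ : List Bool) (r : ℚ) : ℚ := A τ - (1 / 2 : ℚ) ^ (i + k) * r
  let step (i : ℕ) (τ : List Bool) (r : ℚ × ℚ) : ℚ × ℚ :=
    bif decide (y i τ r.2 ≤ r.1) then (y i τ r.2, B τ) else r
  have hstep : Computable fun z : ℕ × List Bool × ℚ × ℚ => step z.1 z.2.1 z.2.2 := by
    unfold step y; fun_prop
  let S := runAlong (fun i => (y i [] (B []), B [])) step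
  have hS : Computable fun z : ℕ × List Bool => S z.1 z.2 :=
    computable_runAlong (by unfold y; fun_prop) hstep
  have hy (i s : ℕ) (r : ℚ) : (A (initSeg haltingSeq s) : ℝ) - (1 / 2) ^ (i + k) * r =
      (y i (initSeg haltingSeq s) r : ℝ) := by simp [y]
  have hsucc (i s : ℕ) : S i (initSeg haltingSeq (s + 1)) =
      step i (initSeg haltingSeq s) (S i (initSeg haltingSeq s)) :=
    runAlong_initSeg_succ _ step i haltingSeq s
  refine ⟨fun i τ => (S i τ).1,
    fun i τ => A τ - 2 * ((1 / 2 : ℚ) ^ (i + k) * ((S i τ).2 - (step i τ (S i τ)).2)),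
    by fun_prop, by fun_prop, fun i => ⟨fun s => (S i (initSeg haltingSeq s)).2,
      ⟨rfl, (hy i 0 _).symm, fun s h => ?_, fun s h => ?_, fun s h => ?_, fun s h => ?_⟩,
      fun s => by simp [hsucc]⟩⟩
  all_goals
    rw [hy] at h
    simp only [hsucc]
  · simp only [step, Rat.cast_le.1 h, decide_true, cond_true]
  · simp only [hy, step, Rat.cast_le.1 h, decide_true, cond_true]
  · simp only [step, (Rat.cast_lt.1 h).not_ge, decide_false, cond_false]
  · simp only [step, (Rat.cast_lt.1 h).not_ge, decide_false, cond_false]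

theorem MLRandomIn.exists_jumpCe_sub_mul_lt (hα : MLRandomIn (iterJump 1) α)
    (hαce : JumpCe fun q : ℚ => α < q) (hβce : JumpCe fun q : ℚ => β < q) (n₀ : ℕ) :
    ∃ n ≥ n₀, JumpCe fun q : ℚ => α - (1 / 2) ^ n * β < q := by
  obtain ⟨A, hA, hAα⟩ := hαce.exists_computable_decreasesTo
  obtain ⟨B, hB, hBβ⟩ := hβce.exists_computable_decreasesTo
  obtain ⟨k, hk⟩ := pow_unbounded_of_one_lt (2 * (B [] - β)) (one_lt_two (α := ℝ))
  obtain ⟨Y, L, hY, hL, hKS⟩ := exists_computable_kuceraSlaman hA hB (n₀ + k)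
  choose c hKS hLc using hKS
  have hb : Antitone fun s => (B (initSeg haltingSeq s) : ℝ) :=
    Rat.cast_mono.comp_antitone hBβ.antitone
  obtain ⟨W, hW, hWL⟩ := exists_ceIn_testSet_eq (P := fun i τ => (L i τ, A τ)) (by fun_prop)
  simp only [hLc] at hWL
  have hvol (i : ℕ) : volume (testSet W i) ≤ ENNReal.ofReal ((2 : ℝ)⁻¹ ^ i) := by
    rw [hWL]
    refine ((hKS i).volume_iUnion_Ioo_le (by positivity) hb fun s => (hBβ.lt s).le).trans
      (ENNReal.ofReal_le_ofReal ?_)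
    calc 2 * (1 / 2) ^ (i + (n₀ + k)) * (B [] - β)
        = 2⁻¹ ^ i * (2⁻¹ ^ n₀ * (2⁻¹ ^ k * (2 * (B [] - β)))) := by rw [one_div]; ring
      _ ≤ 2⁻¹ ^ i * (1 * (2⁻¹ ^ k * 2 ^ k)) := by
          have := pow_le_one₀ (n := n₀) (show (0 : ℝ) ≤ 2⁻¹ by norm_num) (by norm_num)
          have := (hBβ.lt 0).le
          gcongr
      _ = 2⁻¹ ^ i := by rw [← mul_pow]; norm_num
  obtain ⟨i, hi⟩ := hα W hW hvol
  rw [hWL, Set.mem_iUnion, not_exists] at hi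
  refine ⟨i + (n₀ + k), by omega, ((jumpCe_exists_lt (B := fun _ : Unit => Y i)
    (by fun_prop)).comp (f := fun q => ((), q)) (by fun_prop)).congr fun q => ?_⟩
  rw [← (hKS i).exists_lt_iff hb hAα.lt hAα.tendsto hBβ.tendsto hi]
  simp only [Rat.cast_lt]

end KuceraSlaman

section UniversalMachine

theorem eq_of_unary_prefix_unary {k m : ℕ} (h : unary k <+: unary m) : k = m := by
  obtain ⟨τ, h⟩ := h
  have hk := leadingOnes_unary_append k τ
  have hm := leadingOnes_unary_append m []
  rw [List.append_nil] at hm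
  rw [h, hm] at hk
  exact hk.symm

theorem universalOM_of_evalO_prepend {u d : CodeO} {ρ : List Bool}
    (hd : ∀ c X n, evalO (prepend (unary c.encode) X) d n = evalO X c n)
    (hu : ∀ X n, evalO (prepend ρ X) u n = evalO X d n) : UniversalOM u := by
  refine ⟨fun c => ρ ++ unary c.encode,
    ⟨fun e => Encodable.encode (ρ ++ unary e), by fun_prop, fun c => rfl⟩, ?_, fun c X n => ?_⟩
  · rintro _ ⟨c, rfl⟩ _ ⟨c', rfl⟩ h
    exact congrArg (ρ ++ unary ·) (eq_of_unary_prefix_unary ((List.prefix_append_right_inj ρ).1 h))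
  · rw [prepend_append, hu, hd]

theorem binVal_replicate_false (n : ℕ) : binVal (List.replicate n false) = 0 := by
  induction n with
  | zero => rfl
  | succ n ih => rw [List.replicate_succ', binVal_append_singleton, ih]; rfl

theorem extends_digits_replicate_false_iff {x : ℝ} (hx : x ∈ Set.Ico (0 : ℝ) 1) (n : ℕ) :
    Extends (digits x) (List.replicate n false) ↔ x < (1 / 2) ^ n := by
  have h0 : 0 ≤ x * 2 ^ n := mul_nonneg hx.1 (by positivity)
  have h := digits_mem_cylinder_iff (x := x) (List.replicate n false)
  rw [and_iff_right hx, binVal_replicate_false, List.length_replicate, Nat.cast_zero, sub_zero,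
    Set.mem_Ico, and_iff_right h0] at h
  rw [h, one_div, inv_pow, ← one_div, lt_div_iff₀ (by positivity)]

theorem exists_universalOM_muR_TOT_eq {d : CodeO}
    (hd : ∀ c X n, evalO (prepend (unary c.encode) X) d n = evalO X c n) {n : ℕ} {γ : ℝ}
    (hγ : JumpCe fun q : ℚ => γ < q) (hn : (1 / 2) ^ n ≤ γ) (hγ1 : γ ≤ 1) :
    ∃ u, UniversalOM u ∧ muR (TOT u) = (1 / 2) ^ n * muR (TOT d) + (γ - (1 / 2) ^ n) := by
  obtain ⟨Q, hQ, hQγ⟩ := exists_piTwoClass_digits_mem_iff (β := fun _ : Unit => γ)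
    (hγ.sigmaTwo.comp (f := fun z : Unit × ℚ => z.2) (by fun_prop))
  let ρ : List Bool := List.replicate n false
  have hρ : ρ.length = n := List.length_replicate
  obtain ⟨u, hu, hoff⟩ := exists_codeO_onCone ρ d (Q := Q ()) (by fun_prop)
  have hcone : {Y | prepend ρ Y ∈ TOT u} = TOT d := by
    ext Y
    simp only [TOT, Set.mem_ofPred_eq, hu]
  have hmeas : MeasurableSet {X | ¬ Extends X ρ ∧ X ∈ TOT u} :=
    (measurableSet_initSeg ρ.length fun τ => ¬ τ = ρ).inter (measurableSet_TOT u)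
  refine ⟨u, universalOM_of_evalO_prepend hd hu, ?_⟩
  rw [muR_eq_cylinder_add_compl ρ (measurableSet_TOT u), hcone, hρ,
    muR_eq_sub hmeas (by positivity) hn hγ1 fun x hx => ?_]
  rw [Set.mem_ofPred_eq, and_congr_right (hoff _), hQγ () x hx,
    extends_digits_replicate_false_iff hx, not_lt, Set.mem_Icc]

theorem exists_universalOM_of_mlRandomIn {α : ℝ} (h0 : 0 < α) (h1 : α < 1)
    (hα : MLRandomIn (iterJump 1) α) (hce : RightCeIn (iterJump 1) α) :
    ∃ u, UniversalOM u ∧ muR (TOT u) = α := by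
  obtain ⟨d, hd⟩ := exists_codeO_prepend_unary
  obtain ⟨n₀, hn₀⟩ := exists_pow_lt_of_lt_one (lt_min h0 (sub_pos.2 h1)) (one_half_lt_one (α := ℝ))
  obtain ⟨n, hn, hJ⟩ := hα.exists_jumpCe_sub_mul_lt (rightCeIn_iterJump_one_iff.1 hce)
    (rightCeIn_iterJump_one_iff.1 (rightCeIn_muR_TOT d)) n₀
  have hδ : (1 / 2 : ℝ) ^ n < min α (1 - α) :=
    (pow_le_pow_of_le_one (by norm_num) (by norm_num) hn).trans_lt hn₀
  have hδα := hδ.trans_le (min_le_left _ _)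
  have hδα' := hδ.trans_le (min_le_right _ _)
  let δ : ℚ := (1 / 2) ^ n
  have hle : (1 / 2) ^ n * muR (TOT d) ≤ (1 / 2) ^ n :=
    mul_le_of_le_one_right (by positivity) (muR_le_one _)
  have hge : 0 ≤ (1 / 2) ^ n * muR (TOT d) := mul_nonneg (by positivity) (muR_nonneg _)
  have hγ : JumpCe fun q : ℚ => α - (1 / 2) ^ n * muR (TOT d) + (1 / 2) ^ n < q :=
    (hJ.comp (f := fun q => q - δ) (by fun_prop)).congr fun q => by
      rw [Rat.cast_sub, lt_sub_iff_add_lt]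
      simp [δ]
  obtain ⟨u, hu, hTOT⟩ := exists_universalOM_muR_TOT_eq hd hγ
    (le_add_of_nonneg_left (sub_nonneg.2 (hle.trans hδα.le)))
    ((add_le_add_left (sub_le_self α hge) _).trans (lt_sub_iff_add_lt'.1 hδα').le)
  exact ⟨u, hu, by rw [hTOT]; ring⟩

end UniversalMachine

/-- **Totality probability for universal oracle machines.**
The probability that the function computed by a universal oracle machine is total is a
2-random `∅'`-right-c.e. real; conversely, every 2-random `∅'`-right-c.e. real in `(0,1)`
is the totality probability of some universal oracle machine. -/
theorem totality_probability_characterization :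
    (∀ u : CodeO, UniversalOM u →
        NRandom 2 (muR (TOT u)) ∧ RightCeIn (iterJump 1) (muR (TOT u))) ∧
    (∀ α : ℝ, 0 < α → α < 1 → NRandom 2 α → RightCeIn (iterJump 1) α →
        ∃ u : CodeO, UniversalOM u ∧ muR (TOT u) = α) :=
  ⟨fun _ hu => ⟨mlRandomIn_muR_TOT hu, rightCeIn_muR_TOT _⟩,
    fun _ h0 h1 hα hce => exists_universalOM_of_mlRandomIn h0 h1 hα hce⟩

end RandProb
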